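/- arXiv:2207.10419 — 11 statements merged into one kernel-verified Lean document; each statement's English description precedes it below -/
import Mathlib

section
/- Let f : ℝ → ℂ be an even Schwartz function and let z ∈ ℂ with Im(z) > 1/2. Then the function u ↦ (ℰf)(u)·u^{−iz} is integrable on (0,∞) with respect to d*u, and ∫₀^∞ (ℰf)(u) u^{−iz} d*u = ζ(1/2 − iz) · ψ_f(z). -/
/-!
Put `s = 1/2 - iz`, so that `Re s = 1/2 + Im z > 1`. On `(0, ∞)` the integrand is
`∑ₙ u^(s-1) f((n+1)u)`. The substitution `u ↦ (n+1)u` shows that the `L¹` norm of the `n`-th term is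
`(n+1)^(-Re s)` times that of `u^(s-1) f(u)`, hence summable in `n`. This gives integrability of the
sum (`integrable_tsum_of_summable_integral_norm`) and allows termwise integration; the same
substitution makes the `n`-th integral `(n+1)^(-s) ψ_f(z)`, and `∑ₙ (n+1)^(-s) = ζ(s)`.
-/

open MeasureTheory Set

/-- `(ℰ f)(u) = u^{1/2} ∑_{n ≥ 1} f(n u)`. -/
noncomputable def Emap (f : ℝ → ℂ) (u : ℝ) : ℂ :=
  (u : ℂ) ^ ((1 : ℂ)/2) * ∑' n : ℕ, f ((n + 1) * u)

/-- `ψ_f(z) = ∫₀^∞ f(u) u^{1/2 - iz} du/u`. -/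
noncomputable def psi (f : ℝ → ℂ) (z : ℂ) : ℂ :=
  ∫ u in Ioi (0:ℝ), f u * (u : ℂ) ^ ((1 : ℂ)/2 - Complex.I * z) / (u : ℂ)

/-- A series of integrable functions with summable `L¹` norms has an integrable sum. -/
lemma integrable_tsum_of_summable_integral_norm {α : Type*} [MeasurableSpace α] {μ : Measure α}
    {F : ℕ → α → ℂ} (hF_int : ∀ n, Integrable (F n) μ)
    (hF_sum : Summable fun n ↦ ∫ a, ‖F n a‖ ∂μ) :
    Integrable (fun a ↦ ∑' n, F n a) μ := by
  have hterm (n : ℕ) : ∫⁻ a, ‖F n a‖ₑ ∂μ = ENNReal.ofReal (∫ a, ‖F n a‖ ∂μ) :=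
    (ofReal_integral_norm_eq_lintegral_enorm (hF_int n)).symm
  have hfin : ∫⁻ a, ∑' n, ‖F n a‖ₑ ∂μ < ⊤ := by
    rw [lintegral_tsum fun n ↦ (hF_int n).1.enorm]
    simp_rw [hterm]
    exact hF_sum.tsum_ofReal_lt_top
  have hsummable : ∀ᵐ a ∂μ, Summable fun n ↦ F n a := by
    filter_upwards [ae_lt_top' (AEMeasurable.tsum fun n ↦ (hF_int n).1.enorm) hfin.ne]
      with a ha
    refine Summable.of_norm ?_
    exact NNReal.summable_coe.2 (ENNReal.tsum_coe_ne_top_iff_summable.1 ha.ne)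
  refine ⟨?_, (lintegral_mono fun a ↦ enorm_tsum_le_tsum_enorm).trans_lt hfin⟩
  refine aestronglyMeasurable_of_tendsto_ae Filter.atTop
    (f := fun (N : ℕ) a ↦ ∑ n ∈ Finset.range N, F n a)
    (fun N ↦ Finset.aestronglyMeasurable_fun_sum _ fun n _ ↦ (hF_int n).1) ?_
  filter_upwards [hsummable] with a ha using ha.hasSum.tendsto_sum_nat

lemma schwartz_mellinConvergent (f : SchwartzMap ℝ ℂ) {s : ℂ} (hs : 0 < s.re) :
    MellinConvergent f s := by
  refine mellinConvergent_of_isBigO_rpow (a := s.re + 1) (b := 0)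
    (f.continuous.locallyIntegrable.locallyIntegrableOn _) ?_ (lt_add_one _) ?_ hs
  · refine ((f.isBigO_cocompact_rpow (-(s.re + 1))).mono _root_.atTop_le_cocompact).congr'
      .rfl ?_
    filter_upwards [Filter.eventually_ge_atTop 0] with x hx
    rw [Real.norm_of_nonneg hx]
  · simp only [neg_zero, Real.rpow_zero]
    exact (f.continuous.tendsto 0).isBigO_one ℝ |>.mono nhdsWithin_le_nhds

/-- The scaling law for the `L¹` norm of the Mellin integrand. -/
lemma integral_norm_mellin_comp_mul_left (f : ℝ → ℂ) (s : ℂ) {a : ℝ} (ha : 0 < a) :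
    ∫ t in Ioi (0 : ℝ), ‖(t : ℂ) ^ (s - 1) • f (a * t)‖ =
      a ^ (-s.re) * ∫ t in Ioi (0 : ℝ), ‖(t : ℂ) ^ (s - 1) • f t‖ := by
  have h := integral_comp_mul_left_Ioi (fun t : ℝ ↦ ‖(t : ℂ) ^ (s - 1) • f t‖) 0 ha
  rw [mul_zero] at h
  have h2 : ∫ t in Ioi (0 : ℝ), ‖((a * t : ℝ) : ℂ) ^ (s - 1) • f (a * t)‖ =
      a ^ (s.re - 1) * ∫ t in Ioi (0 : ℝ), ‖(t : ℂ) ^ (s - 1) • f (a * t)‖ := by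
    rw [← integral_const_mul]
    refine setIntegral_congr_fun measurableSet_Ioi fun t (ht : 0 < t) ↦ ?_
    simp only [norm_smul, Complex.norm_cpow_eq_rpow_re_of_pos ht,
      Complex.norm_cpow_eq_rpow_re_of_pos (mul_pos ha ht), Complex.sub_re, Complex.one_re,
      Real.mul_rpow ha.le ht.le]
    ring
  rw [h2, smul_eq_mul] at h
  have hpos : 0 < a ^ (s.re - 1) := Real.rpow_pos_of_pos ha _
  have h3 : a⁻¹ = a ^ (s.re - 1) * a ^ (-s.re) := by
    rw [← Real.rpow_add ha, ← Real.rpow_neg_one]; congr 1; ring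
  rw [h3, mul_assoc] at h
  exact mul_left_cancel₀ hpos.ne' h

theorem stmt0 (f : SchwartzMap ℝ ℂ) (hev : ∀ x : ℝ, f (-x) = f x)
    (z : ℂ) (hz : 1/2 < z.im) :
    IntegrableOn (fun u : ℝ => Emap (⇑f) u * (u : ℂ) ^ (-(Complex.I * z)) / (u : ℂ))
      (Ioi 0) ∧
    ∫ u in Ioi (0:ℝ), Emap (⇑f) u * (u : ℂ) ^ (-(Complex.I * z)) / (u : ℂ)
      = riemannZeta (1/2 - Complex.I * z) * psi (⇑f) z := by
  set s : ℂ := 1/2 - Complex.I * z with hs_def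
  have hs : 1 < s.re := by
    simp [hs_def]
    linarith
  have hpos (n : ℕ) : (0 : ℝ) < n + 1 := by positivity
  let F : ℕ → ℝ → ℂ := fun n t ↦ (t : ℂ) ^ (s - 1) • f ((n + 1) * t)
  have hF_int (n : ℕ) : IntegrableOn (F n) (Ioi 0) :=
    (MellinConvergent.comp_mul_left (hpos n)).2 (schwartz_mellinConvergent f (by linarith))
  have hF_sum : Summable fun n ↦ ∫ t in Ioi (0 : ℝ), ‖F n t‖ := by
    simp_rw [F, integral_norm_mellin_comp_mul_left f s (hpos _)]
    refine Summable.mul_right _ ?_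
    have := (summable_nat_add_iff 1).2 (Real.summable_nat_rpow.2 (neg_lt_neg hs))
    simpa using this
  have hcongr : EqOn (fun u : ℝ => Emap (⇑f) u * (u : ℂ) ^ (-(Complex.I * z)) / (u : ℂ))
      (fun u ↦ ∑' n, F n u) (Ioi 0) := by
    intro u (hu : 0 < u)
    have hu' : (u : ℂ) ≠ 0 := Complex.ofReal_ne_zero.2 hu.ne'
    have h : (u : ℂ) ^ (s - 1) = (u : ℂ) ^ ((1 : ℂ)/2) * (u : ℂ) ^ (-(Complex.I * z)) / u := by
      rw [← Complex.cpow_add _ _ hu', Complex.cpow_sub _ _ hu', Complex.cpow_one, hs_def,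
        sub_eq_add_neg]
    simp only [F, smul_eq_mul, tsum_mul_left, h, Emap]
    ring
  have hpsi : psi f z = mellin f s := by
    refine setIntegral_congr_fun measurableSet_Ioi fun u (hu : 0 < u) ↦ ?_
    have hu' : (u : ℂ) ≠ 0 := Complex.ofReal_ne_zero.2 hu.ne'
    simp only [Complex.cpow_sub s 1 hu', Complex.cpow_one, smul_eq_mul, ← hs_def]
    ring
  refine ⟨(integrable_tsum_of_summable_integral_norm hF_int hF_sum).congr ?_, ?_⟩
  · filter_upwards [ae_restrict_mem measurableSet_Ioi] with u hu using (hcongr hu).symm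
  · rw [setIntegral_congr_fun measurableSet_Ioi hcongr,
      ← integral_tsum_of_summable_integral_norm hF_int hF_sum, hpsi,
      zeta_eq_tsum_one_div_nat_add_one_cpow hs, ← tsum_mul_right]
    refine tsum_congr fun n ↦ ?_
    refine (mellin_comp_mul_left f s (hpos n)).trans ?_
    simp [Complex.cpow_neg]
end

section
/- Let f : ℝ → ℂ be an even Schwartz function with ∫_ℝ f(x) dx = 0. Then the function z ↦ ∫₀^∞ (ℰf)(u) u^{−iz} d*u is well-defined and holomorphic on the half-plane 𝔥 = {z ∈ ℂ : Im(z) > −1/2}, and for every z ∈ 𝔥 with z ≠ i/2 one has ∫₀^∞ (ℰf)(u) u^{−iz} d*u = ζ(1/2 − iz) · ψ_f(z). -/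
/-!
Put `F(u) = ∑_{n ≥ 1} f(nu)` and `s = 1/2 - iz`, so that the integral in question is the Mellin
transform of `F` at `s`, the function `ψ_f(z)` is the Mellin transform of `f` at `s`, and the
half-plane `Im z > -1/2` becomes `Re s > 0`.

The sum `F` is continuous on `(0, ∞)` and decays faster than any power at infinity, because `f` is
Schwartz (`dilSum_isBigO_atTop`). It is bounded near `0` (`norm_dilSum_le`): `u F(u)` is a Riemann
sum with step `u` for `∫₀^∞ f`, which vanishes as `f` is even with integral zero, and the error of
such a sum is at most `u ∫ ‖f'‖`. Hence the Mellin transform of `F` converges and is holomorphic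
on `Re s > 0`; the same holds for `f`.

For `Re s > 1` the sum and the integral can be interchanged, which gives
`mellin F s = ζ(s) mellin f s` (`mellin_dilSum_of_one_lt_re`). After multiplication by `s - 1`,
which removes the pole of `ζ`, both sides are holomorphic on `Re s > 0`, and the identity theorem
extends the equality to that half-plane.
-/

open MeasureTheory Set

open Filter Topology Asymptotics

/-- The sum over dilations `∑_{n ≥ 1} f(nu)`, i.e. `ℰf` without the factor `u^{1/2}`. -/
noncomputable def dilSum (f : ℝ → ℂ) (u : ℝ) : ℂ := ∑' n : ℕ, f ((n + 1) * u)

/-! ### Decay and continuity of the sum over dilations -/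

lemma schwartz_decay (f : SchwartzMap ℝ ℂ) (k : ℕ) :
    ∃ C : ℝ, 0 ≤ C ∧ ∀ x : ℝ, 0 < x → ‖f x‖ ≤ C * (x ^ k)⁻¹ := by
  refine ⟨SchwartzMap.seminorm ℝ k 0 f, apply_nonneg _ _, fun x hx => ?_⟩
  have h := f.norm_pow_mul_le_seminorm ℝ k x
  rw [Real.norm_of_nonneg hx.le] at h
  rw [← div_eq_mul_inv, le_div_iff₀ (by positivity)]
  linarith

lemma summable_inv_succ_pow {k : ℕ} (hk : 2 ≤ k) :
    Summable (fun n : ℕ => (((n : ℝ) + 1) ^ k)⁻¹) := by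
  have h := (summable_nat_add_iff 1).2 (Real.summable_nat_pow_inv.2 (by omega : 1 < k))
  simpa using h

lemma norm_dilate_le {f : SchwartzMap ℝ ℂ} {k : ℕ} {C : ℝ}
    (hC : ∀ x : ℝ, 0 < x → ‖f x‖ ≤ C * (x ^ k)⁻¹) {u : ℝ} (hu : 0 < u) (n : ℕ) :
    ‖f ((n + 1) * u)‖ ≤ C * (u ^ k)⁻¹ * (((n : ℝ) + 1) ^ k)⁻¹ := by
  refine (hC _ (by positivity)).trans (le_of_eq ?_)
  rw [mul_pow, mul_inv]
  ring

lemma summable_dilate (f : SchwartzMap ℝ ℂ) {u : ℝ} (hu : 0 < u) :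
    Summable (fun n : ℕ => f ((n + 1) * u)) := by
  obtain ⟨C, -, hC⟩ := schwartz_decay f 2
  exact Summable.of_norm_bounded ((summable_inv_succ_pow le_rfl).mul_left _) (norm_dilate_le hC hu)

lemma dilSum_isBigO_atTop (f : SchwartzMap ℝ ℂ) {k : ℕ} (hk : 2 ≤ k) :
    dilSum f =O[atTop] (fun x : ℝ => x ^ (-(k : ℝ))) := by
  obtain ⟨C, -, hC⟩ := schwartz_decay f k
  refine IsBigO.of_bound (C * ∑' n : ℕ, (((n : ℝ) + 1) ^ k)⁻¹) ?_
  filter_upwards [eventually_gt_atTop 0] with u hu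
  have h := tsum_of_norm_bounded ((summable_inv_succ_pow hk).hasSum.mul_left (C * (u ^ k)⁻¹))
    (norm_dilate_le hC hu)
  rw [Real.rpow_neg hu.le, Real.rpow_natCast, Real.norm_of_nonneg (by positivity)]
  refine h.trans (le_of_eq (by ring))

lemma continuousOn_dilSum (f : SchwartzMap ℝ ℂ) : ContinuousOn (dilSum f) (Ioi 0) := by
  obtain ⟨C, hC0, hC⟩ := schwartz_decay f 2
  intro x hx
  have hx : 0 < x := hx
  refine ContinuousAt.continuousWithinAt ?_
  have h : ContinuousOn (dilSum f) (Ioi (x / 2)) := by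
    refine continuousOn_tsum
      (u := fun n : ℕ => C * ((x / 2) ^ 2)⁻¹ * (((n : ℝ) + 1) ^ 2)⁻¹)
      (fun n => (f.continuous.comp (by fun_prop)).continuousOn)
      ((summable_inv_succ_pow le_rfl).mul_left _) (fun n u hu => ?_)
    have hu : x / 2 < u := hu
    refine (norm_dilate_le hC (by linarith) n).trans ?_
    gcongr
  exact h.continuousAt (Ioi_mem_nhds (by linarith))

/-! ### Boundedness near zero -/

lemma integral_Ioi_eq_zero (f : SchwartzMap ℝ ℂ) (hev : ∀ x : ℝ, f (-x) = f x)
    (hint : ∫ x : ℝ, f x = 0) : ∫ x in Ioi (0 : ℝ), f x = 0 := by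
  have h1 := intervalIntegral.integral_Iic_add_Ioi (b := (0 : ℝ)) (f := f) (μ := volume)
    f.integrable.integrableOn f.integrable.integrableOn
  have h2 := integral_comp_neg_Ioi (0 : ℝ) f
  simp only [hev, neg_zero] at h2
  rw [← h2, hint, ← two_mul] at h1
  simpa using h1

/-- The error of the right-endpoint rule on a single interval. -/
lemma norm_step_le (f : SchwartzMap ℝ ℂ) {a b : ℝ} (hab : a ≤ b) :
    ‖((b - a : ℝ) : ℂ) * f b - ∫ x in a..b, f x‖ ≤ (b - a) * ∫ x in a..b, ‖deriv f x‖ := by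
  have hdc : Continuous (deriv f) := (f.smooth 1).continuous_deriv le_rfl
  have h1 : ((b - a : ℝ) : ℂ) * f b - ∫ x in a..b, f x = ∫ x in a..b, (f b - f x) := by
    rw [intervalIntegral.integral_sub (by simp) (f.continuous.intervalIntegrable _ _)]
    simp
  rw [h1]
  have h2 : ∀ x ∈ uIoc a b, ‖f b - f x‖ ≤ ∫ x in a..b, ‖deriv f x‖ := by
    intro x hx
    rw [uIoc_of_le hab] at hx
    rw [← intervalIntegral.integral_eq_sub_of_hasDerivAt
      (fun y _ => (f.differentiableAt (x := y)).hasDerivAt) (hdc.intervalIntegrable _ _)]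
    refine (intervalIntegral.norm_integral_le_integral_norm hx.2).trans ?_
    exact intervalIntegral.integral_mono_interval hx.1.le hx.2 le_rfl
      (Eventually.of_forall fun _ => norm_nonneg _) (hdc.norm.intervalIntegrable _ _)
  refine (intervalIntegral.norm_integral_le_of_norm_le_const h2).trans (le_of_eq ?_)
  rw [abs_of_nonneg (by linarith), mul_comm]

/-- Comparison of the Riemann sum `u ∑ f(nu)` with `∫₀^∞ f = 0`. -/
lemma norm_dilSum_le (f : SchwartzMap ℝ ℂ) (h0 : ∫ x in Ioi (0 : ℝ), f x = 0) {u : ℝ}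
    (hu : 0 < u) : ‖dilSum f u‖ ≤ ∫ x, ‖deriv f x‖ := by
  have hdc : Continuous (deriv f) := (f.smooth 1).continuous_deriv le_rfl
  have hdi : Integrable (fun x => ‖deriv f x‖) := by
    simpa using (SchwartzMap.derivCLM ℝ ℂ f).integrable.norm (μ := volume)
  have key : ∀ N : ℕ, ‖(u : ℂ) * ∑ n ∈ Finset.range N, f ((n + 1) * u)
      - ∫ x in (0 : ℝ)..(N * u), f x‖ ≤ u * ∫ x, ‖deriv f x‖ := by
    intro N
    have hs := intervalIntegral.sum_integral_adjacent_intervals (f := f) (μ := volume)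
      (a := fun n : ℕ => (n : ℝ) * u) (n := N) (fun k _ => f.continuous.intervalIntegrable _ _)
    have hs' := intervalIntegral.sum_integral_adjacent_intervals (f := fun x => ‖deriv f x‖)
      (μ := volume) (a := fun n : ℕ => (n : ℝ) * u) (n := N)
      (fun k _ => hdc.norm.intervalIntegrable _ _)
    simp only [Nat.cast_zero, zero_mul] at hs hs'
    rw [← hs, Finset.mul_sum, ← Finset.sum_sub_distrib]
    calc _ ≤ ∑ n ∈ Finset.range N, u * ∫ x in (n * u)..((n + 1 : ℕ) * u), ‖deriv f x‖ := by
          refine norm_sum_le_of_le _ fun n _ => ?_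
          have h := norm_step_le f (a := n * u) (b := (n + 1 : ℕ) * u) (by gcongr; simp)
          have e : ((n + 1 : ℕ) : ℝ) * u - n * u = u := by push_cast; ring
          rw [e] at h
          simpa using h
      _ = u * ∫ x in (0 : ℝ)..(N * u), ‖deriv f x‖ := by rw [← Finset.mul_sum, hs']
      _ ≤ _ := by
          gcongr
          rw [intervalIntegral.integral_of_le (by positivity)]
          exact setIntegral_le_integral hdi (Eventually.of_forall fun _ => norm_nonneg _)
  have hlim : Tendsto (fun N : ℕ => (u : ℂ) * ∑ n ∈ Finset.range N, f ((n + 1) * u)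
      - ∫ x in (0 : ℝ)..(N * u), f x) atTop (𝓝 ((u : ℂ) * dilSum f u - 0)) := by
    refine Tendsto.sub ((summable_dilate f hu).hasSum.tendsto_sum_nat.const_mul _) ?_
    rw [← h0]
    exact intervalIntegral_tendsto_integral_Ioi 0 f.integrable.integrableOn
      (tendsto_natCast_atTop_atTop.atTop_mul_const hu)
  have h := le_of_tendsto hlim.norm (Eventually.of_forall key)
  rw [sub_zero, norm_mul, Complex.norm_real, Real.norm_of_nonneg hu.le] at h
  exact le_of_mul_le_mul_left h hu

/-! ### Mellin transforms on the right half-plane -/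

lemma isBigO_zero_of_bounded {g : ℝ → ℂ} {C : ℝ} (h : ∀ u : ℝ, 0 < u → ‖g u‖ ≤ C) :
    g =O[𝓝[>] 0] (fun x : ℝ => x ^ (-(0 : ℝ))) := by
  refine IsBigO.of_bound C ?_
  filter_upwards [self_mem_nhdsWithin] with u hu
  simpa using h u hu

lemma mellin_nice {g : ℝ → ℂ} (hc : ContinuousOn g (Ioi 0)) {C : ℝ}
    (h0 : ∀ u : ℝ, 0 < u → ‖g u‖ ≤ C)
    (htop : ∀ k : ℕ, 2 ≤ k → g =O[atTop] (fun x : ℝ => x ^ (-(k : ℝ)))) {s : ℂ} (hs : 0 < s.re) :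
    MellinConvergent g s ∧ DifferentiableAt ℂ (mellin g) s := by
  have hl : LocallyIntegrableOn g (Ioi 0) := hc.locallyIntegrableOn measurableSet_Ioi
  obtain ⟨k, hk⟩ := exists_nat_gt s.re
  have hk' : s.re < ((k + 2 : ℕ) : ℝ) := by push_cast; linarith
  exact ⟨mellinConvergent_of_isBigO_rpow hl (htop (k + 2) (by omega)) hk'
      (isBigO_zero_of_bounded h0) hs,
    mellin_differentiableAt_of_isBigO_rpow hl (htop (k + 2) (by omega)) hk'
      (isBigO_zero_of_bounded h0) hs⟩

lemma mellin_schwartz (f : SchwartzMap ℝ ℂ) {s : ℂ} (hs : 0 < s.re) :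
    MellinConvergent f s ∧ DifferentiableAt ℂ (mellin f) s := by
  obtain ⟨C, -, hC⟩ := schwartz_decay f 0
  refine mellin_nice f.continuous.continuousOn (C := C)
    (fun u hu => by simpa using hC u hu) (fun k _ => ?_) hs
  obtain ⟨D, -, hD⟩ := schwartz_decay f k
  refine IsBigO.of_bound D ?_
  filter_upwards [eventually_gt_atTop 0] with u hu
  rw [Real.rpow_neg hu.le, Real.rpow_natCast, Real.norm_of_nonneg (by positivity)]
  exact hD u hu

lemma mellin_dilSum (f : SchwartzMap ℝ ℂ) (h0 : ∫ x in Ioi (0 : ℝ), f x = 0) {s : ℂ}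
    (hs : 0 < s.re) : MellinConvergent (dilSum f) s ∧ DifferentiableAt ℂ (mellin (dilSum f)) s :=
  mellin_nice (continuousOn_dilSum f) (fun _ hu => norm_dilSum_le f h0 hu)
    (fun _ hk => dilSum_isBigO_atTop f hk) hs

/-! ### The product formula -/

lemma mellin_dilSum_of_one_lt_re (f : SchwartzMap ℝ ℂ) {s : ℂ} (hs : 1 < s.re) :
    mellin (dilSum f) s = riemannZeta s * mellin f s := by
  have hf := (mellin_schwartz f (zero_lt_one.trans hs)).1
  set G : ℕ → ℝ → ℂ := fun n t => (t : ℂ) ^ (s - 1) • f ((n + 1) * t) with hG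
  have hGi : ∀ n, Integrable (G n) (volume.restrict (Ioi 0)) := fun n =>
    (MellinConvergent.comp_mul_left (f := f) (s := s) (a := (n : ℝ) + 1) (by positivity)).2 hf
  have hnorm : ∀ n, ∫ t in Ioi (0 : ℝ), ‖G n t‖ =
      ((n : ℝ) + 1) ^ (-s.re) * ∫ t in Ioi (0 : ℝ), ‖(t : ℂ) ^ (s - 1) • f t‖ := by
    intro n
    have ha : (0 : ℝ) < (n : ℝ) + 1 := by positivity
    have h1 : ∀ t ∈ Ioi (0 : ℝ), ‖G n t‖ = ((n : ℝ) + 1) ^ (1 - s.re) *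
        ‖((((n : ℝ) + 1) * t : ℝ) : ℂ) ^ (s - 1) • f (((n : ℝ) + 1) * t)‖ := by
      intro t ht
      have ht : 0 < t := ht
      simp only [hG, norm_smul]
      rw [Complex.norm_cpow_eq_rpow_re_of_pos ht,
        Complex.norm_cpow_eq_rpow_re_of_pos (by positivity), Real.mul_rpow ha.le ht.le,
        ← mul_assoc, ← mul_assoc, ← Real.rpow_add ha]
      simp
    rw [setIntegral_congr_fun measurableSet_Ioi h1, integral_const_mul,
      integral_comp_mul_left_Ioi (fun t : ℝ => ‖(t : ℂ) ^ (s - 1) • f t‖) 0 ha, mul_zero,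
      smul_eq_mul, ← mul_assoc]
    congr 1
    rw [← Real.rpow_neg_one ((n : ℝ) + 1), ← Real.rpow_add ha]
    congr 1
    ring
  have hsum : Summable (fun n => ∫ t in Ioi (0 : ℝ), ‖G n t‖) := by
    simp_rw [hnorm]
    refine Summable.mul_right _ ?_
    have h := (summable_nat_add_iff 1).2 (Real.summable_nat_rpow.2 (by linarith : -s.re < -1))
    simpa using h
  have hs1 := hasSum_integral_of_summable_integral_norm hGi hsum
  have h2 : ∀ n : ℕ, ∫ t in Ioi (0 : ℝ), G n t = 1 / ((n : ℂ) + 1) ^ s * mellin f s := by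
    intro n
    have h := mellin_comp_mul_left f s (a := (n : ℝ) + 1) (by positivity)
    rw [Complex.cpow_neg] at h
    simpa [mellin, hG] using h
  have h3 : mellin (dilSum f) s = ∫ t in Ioi (0 : ℝ), ∑' n, G n t := by
    simp only [mellin, dilSum, hG, smul_eq_mul, tsum_mul_left]
  rw [h3, ← hs1.tsum_eq, zeta_eq_tsum_one_div_nat_add_one_cpow hs, ← tsum_mul_right]
  exact tsum_congr h2

/-- The entire function `(s - 1) ζ(s)`, with its value `1` at the removable singularity `s = 1`. -/
noncomputable def zetaReg : ℂ → ℂ := Function.update (fun s => (s - 1) * riemannZeta s) 1 1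

lemma zetaReg_of_ne {s : ℂ} (hs : s ≠ 1) : zetaReg s = (s - 1) * riemannZeta s :=
  Function.update_of_ne hs _ _

lemma differentiable_zetaReg : Differentiable ℂ zetaReg := by
  rw [← differentiableOn_univ,
    ← Complex.differentiableOn_compl_singleton_and_continuousAt_iff (c := 1) univ_mem]
  refine ⟨fun s hs => ?_, continuousAt_update_same.2 riemannZeta_residue_one⟩
  have hs : s ≠ 1 := hs.2
  have h : DifferentiableAt ℂ (fun s => (s - 1) * riemannZeta s) s :=
    (by fun_prop : DifferentiableAt ℂ (fun s : ℂ => s - 1) s).mul (differentiableAt_riemannZeta hs)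
  refine (h.congr_of_eventuallyEq ?_).differentiableWithinAt
  filter_upwards [isOpen_ne.mem_nhds hs] with t ht using zetaReg_of_ne ht

lemma mellin_dilSum_eq (f : SchwartzMap ℝ ℂ) (h0 : ∫ x in Ioi (0 : ℝ), f x = 0) {s : ℂ}
    (hs : 0 < s.re) (hs1 : s ≠ 1) : mellin (dilSum f) s = riemannZeta s * mellin f s := by
  have hU : IsOpen {s : ℂ | 0 < s.re} := isOpen_lt continuous_const Complex.continuous_re
  have hL : AnalyticOnNhd ℂ (fun s => (s - 1) * mellin (dilSum f) s) {s : ℂ | 0 < s.re} :=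
    DifferentiableOn.analyticOnNhd (fun t ht =>
      ((by fun_prop : DifferentiableAt ℂ (fun s : ℂ => s - 1) t).mul
        (mellin_dilSum f h0 ht).2).differentiableWithinAt) hU
  have hR : AnalyticOnNhd ℂ (fun s => zetaReg s * mellin f s) {s : ℂ | 0 < s.re} :=
    DifferentiableOn.analyticOnNhd (fun t ht =>
      ((differentiable_zetaReg t).mul (mellin_schwartz f ht).2).differentiableWithinAt) hU
  have hV : {s : ℂ | 1 < s.re} ∈ 𝓝 (2 : ℂ) :=
    (isOpen_lt continuous_const Complex.continuous_re).mem_nhds (by simp)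
  have heq := hL.eqOn_of_preconnected_of_eventuallyEq hR
    (convex_halfSpace_re_gt 0).isPreconnected (z₀ := 2) (by simp) (by
      filter_upwards [hV] with t ht
      have ht : 1 < t.re := ht
      have ht1 : t ≠ 1 := by rintro rfl; simp at ht
      rw [mellin_dilSum_of_one_lt_re f ht, zetaReg_of_ne ht1, mul_assoc])
  have h := heq hs
  simp only [zetaReg_of_ne hs1, mul_assoc] at h
  exact mul_left_cancel₀ (sub_ne_zero.2 hs1) h

/-! ### Translation to the variable `z` -/

lemma Emap_integrand_eq (f : ℝ → ℂ) (z : ℂ) {u : ℝ} (hu : u ∈ Ioi (0 : ℝ)) :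
    Emap f u * (u : ℂ) ^ (-(Complex.I * z)) / (u : ℂ) =
      (u : ℂ) ^ ((1 / 2 - Complex.I * z) - 1) • dilSum f u := by
  have hu0 : (u : ℂ) ≠ 0 := Complex.ofReal_ne_zero.2 (ne_of_gt hu)
  rw [Complex.cpow_sub _ _ hu0, sub_eq_add_neg, Complex.cpow_add _ _ hu0, Complex.cpow_one,
    smul_eq_mul, Emap, dilSum]
  ring

lemma psi_eq_mellin (f : ℝ → ℂ) (z : ℂ) : psi f z = mellin f (1 / 2 - Complex.I * z) := by
  refine setIntegral_congr_fun measurableSet_Ioi fun u hu => ?_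
  have hu0 : (u : ℂ) ≠ 0 := Complex.ofReal_ne_zero.2 (ne_of_gt hu)
  simp only [smul_eq_mul]
  rw [Complex.cpow_sub _ 1 hu0, Complex.cpow_one]
  ring

lemma Emap_integral_eq_mellin (f : ℝ → ℂ) (z : ℂ) :
    ∫ u in Ioi (0:ℝ), Emap f u * (u : ℂ) ^ (-(Complex.I * z)) / (u : ℂ) =
      mellin (dilSum f) (1 / 2 - Complex.I * z) :=
  setIntegral_congr_fun measurableSet_Ioi fun _ hu => Emap_integrand_eq f z hu

theorem stmt1 (f : SchwartzMap ℝ ℂ) (hev : ∀ x : ℝ, f (-x) = f x)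
    (hint : ∫ x : ℝ, f x = 0) :
    (∀ z : ℂ, -(1/2) < z.im →
      IntegrableOn (fun u : ℝ => Emap (⇑f) u * (u : ℂ) ^ (-(Complex.I * z)) / (u : ℂ))
        (Ioi 0)) ∧
    DifferentiableOn ℂ
      (fun z : ℂ => ∫ u in Ioi (0:ℝ), Emap (⇑f) u * (u : ℂ) ^ (-(Complex.I * z)) / (u : ℂ))
      {z : ℂ | -(1/2) < z.im} ∧
    (∀ z : ℂ, -(1/2) < z.im → z ≠ Complex.I/2 →
      ∫ u in Ioi (0:ℝ), Emap (⇑f) u * (u : ℂ) ^ (-(Complex.I * z)) / (u : ℂ)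
        = riemannZeta (1/2 - Complex.I * z) * psi (⇑f) z) := by
  have h0 := integral_Ioi_eq_zero f hev hint
  have hre : ∀ z : ℂ, -(1/2) < z.im → 0 < (1 / 2 - Complex.I * z).re := by
    intro z hz
    simp
    linarith
  refine ⟨fun z hz => ?_, fun z hz => ?_, fun z hz hz1 => ?_⟩
  · exact (integrableOn_congr_fun (fun u hu => Emap_integrand_eq f z hu) measurableSet_Ioi).2
      (mellin_dilSum f h0 (hre z hz)).1
  · simp_rw [Emap_integral_eq_mellin]
    exact (DifferentiableAt.comp z (mellin_dilSum f h0 (hre z hz)).2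
      (by fun_prop : DifferentiableAt ℂ (fun z : ℂ => 1 / 2 - Complex.I * z) z)
      ).differentiableWithinAt
  · rw [Emap_integral_eq_mellin, psi_eq_mellin]
    refine mellin_dilSum_eq f h0 (hre z hz) fun h => hz1 ?_
    linear_combination Complex.I * h + z * Complex.I_sq
end

section
/- Let f : (0,∞) → ℂ be a function of bounded variation such that f(u) = O(u^{−N}) as u → ∞ for every N ∈ ℕ, f(u) = O(u²) as u → 0⁺, and ∫₀^∞ f(t) dt = 0. Then: for every u > 0 the series Σ_{n=1}^∞ f(nu) converges absolutely, so (ℰf)(u) = u^{1/2} Σ_{n=1}^∞ f(nu) is well-defined; (ℰf)(u) = O(u^{1/2}) as u → 0⁺; and for every N ∈ ℕ, (ℰf)(u) = O(u^{−N}) as u → ∞. -/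
/-!
The sum `u ∑ f(n u)` is a right-endpoint Riemann sum of `∫₀^∞ f = 0`. On the first `M` cells of
length `u`, the Riemann sum minus the integral equals
`∫₀ᵘ ∑_{n < M} (f((n+1)u) - f(nu + t)) dt`, and for each `t` the integrand is bounded by the total
variation `V` of `f`, since the intervals `[nu + t, (n+1)u]` do not overlap
(`sum_norm_sub_le_variation`). Letting `M → ∞` gives `‖u ∑ f(n u)‖ ≤ u V`
(`norm_tsum_le_variation`), so `∑ f(n u)` is bounded and `ℰ f (u) = O(u^{1/2})` near zero.

Absolute convergence, and the decay of `ℰ f` at infinity, come from comparing `f(n u)` with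
`(n u)^{-K}`.
-/

open MeasureTheory Set Filter Asymptotics

/-- Sampling a function of bounded variation at the right endpoint and at one interior point of each
cell `(n u, (n+1) u]`: the sum of the jumps is at most the variation over the union of the cells. -/
lemma sum_edist_le_variation (f : ℝ → ℂ) {u t : ℝ} (hu : 0 < u) (ht : t ∈ Ioc 0 u) (M : ℕ) :
    ∑ n ∈ Finset.range M, edist (f ((n + 1) * u)) (f (n * u + t))
      ≤ eVariationOn f (Ioc 0 (M * u)) := by
  induction M with
  | zero => simp
  | succ M ih =>
    rw [Finset.sum_range_succ]
    have hcell : edist (f ((M + 1) * u)) (f (M * u + t))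
        ≤ eVariationOn f (Ioc (M * u) ((M + 1) * u)) := by
      apply eVariationOn.edist_le
      · constructor <;> nlinarith
      · constructor <;> nlinarith [ht.1, ht.2]
    refine (add_le_add ih hcell).trans ((eVariationOn.add_le_union f ?_).trans ?_)
    · intro x hx y hy
      exact hx.2.trans hy.1.le
    · apply eVariationOn.mono
      have hM : (0 : ℝ) ≤ M * u := by positivity
      rintro x (hx | hx)
      · refine ⟨hx.1, hx.2.trans ?_⟩
        push_cast
        nlinarith
      · refine ⟨hM.trans_lt hx.1, hx.2.trans ?_⟩
        push_cast
        rfl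

lemma sum_norm_sub_le_variation {f : ℝ → ℂ} (hBV : BoundedVariationOn f (Ioi 0)) {u t : ℝ}
    (hu : 0 < u) (ht : t ∈ Ioc 0 u) (M : ℕ) :
    ∑ n ∈ Finset.range M, ‖f ((n + 1) * u) - f (n * u + t)‖
      ≤ (eVariationOn f (Ioi 0)).toReal := by
  rw [← ENNReal.ofReal_le_iff_le_toReal hBV,
    ENNReal.ofReal_sum_of_nonneg (fun _ _ => norm_nonneg _)]
  simp_rw [← dist_eq_norm, ← edist_dist]
  exact (sum_edist_le_variation f hu ht M).trans (eVariationOn.mono f Ioc_subset_Ioi_self)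

lemma aemeasurable_of_real_boundedVariationOn {g : ℝ → ℝ} (hg : BoundedVariationOn g (Ioi 0)) :
    AEMeasurable g (volume.restrict (Ioi 0)) := by
  obtain ⟨p, q, hp, hq, rfl⟩ := hg.locallyBoundedVariationOn.exists_monotoneOn_sub_monotoneOn
  exact (aemeasurable_restrict_of_monotoneOn measurableSet_Ioi hp).sub
    (aemeasurable_restrict_of_monotoneOn measurableSet_Ioi hq)

lemma aestronglyMeasurable_of_boundedVariationOn {f : ℝ → ℂ}
    (hBV : BoundedVariationOn f (Ioi 0)) :
    AEStronglyMeasurable f (volume.restrict (Ioi 0)) := by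
  have hre : LipschitzWith 1 Complex.re := LipschitzWith.of_dist_le_mul fun x y => by
    simpa [dist_eq_norm, Real.norm_eq_abs] using Complex.abs_re_le_norm (x - y)
  have him : LipschitzWith 1 Complex.im := LipschitzWith.of_dist_le_mul fun x y => by
    simpa [dist_eq_norm, Real.norm_eq_abs] using Complex.abs_im_le_norm (x - y)
  have h1 := aemeasurable_of_real_boundedVariationOn (hre.comp_boundedVariationOn hBV)
  have h2 := aemeasurable_of_real_boundedVariationOn (him.comp_boundedVariationOn hBV)
  have h3 : AEMeasurable
      (fun x => ((f x).re : ℂ) + ((f x).im : ℂ) * Complex.I) (volume.restrict (Ioi 0)) :=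
    (Complex.measurable_ofReal.comp_aemeasurable h1).add
      ((Complex.measurable_ofReal.comp_aemeasurable h2).mul_const _)
  simp only [Complex.re_add_im] at h3
  exact h3.aestronglyMeasurable

/-- A concrete form of the rapid decay: the bound holds beyond some positive threshold. -/
lemma exists_decay_bound {f : ℝ → ℂ} (hdecay : ∀ N : ℕ, f =O[atTop] fun u : ℝ => u ^ (-(N : ℤ)))
    (N : ℕ) : ∃ C R : ℝ, 0 < C ∧ 0 < R ∧ ∀ x, R ≤ x → ‖f x‖ ≤ C * (x ^ N)⁻¹ := by
  obtain ⟨C, hC, h⟩ := (hdecay N).exists_pos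
  obtain ⟨R, hR⟩ := eventually_atTop.1 h.bound
  refine ⟨C, max R 1, hC, by positivity, fun x hx => ?_⟩
  have hx0 : 0 < x := lt_of_lt_of_le one_pos ((le_max_right R 1).trans hx)
  have := hR x ((le_max_left R 1).trans hx)
  rwa [zpow_neg, zpow_natCast, norm_inv, norm_pow, Real.norm_of_nonneg hx0.le] at this

lemma integrableOn_of_boundedVariationOn {f : ℝ → ℂ} (hBV : BoundedVariationOn f (Ioi 0))
    (hdecay : ∀ N : ℕ, f =O[atTop] fun u : ℝ => u ^ (-(N : ℤ))) :
    IntegrableOn f (Ioi 0) := by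
  obtain ⟨C, R, hC, hR, hb⟩ := exists_decay_bound hdecay 2
  have hm := aestronglyMeasurable_of_boundedVariationOn hBV
  rw [← Ioc_union_Ioi_eq_Ioi hR.le]
  refine IntegrableOn.union ?_ ?_
  · have hconst : IntegrableOn (fun _ : ℝ => ‖f 1‖ + (eVariationOn f (Ioi 0)).toReal) (Ioc 0 R) :=
      integrableOn_const (by simp)
    refine hconst.mono' (hm.mono_set Ioc_subset_Ioi_self) ?_
    filter_upwards [ae_restrict_mem measurableSet_Ioc] with x hx
    have h1 := hBV.dist_le (x := x) (y := 1) hx.1 (by simp)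
    rw [dist_eq_norm] at h1
    have h2 := norm_add_le (f 1) (f x - f 1)
    rw [add_sub_cancel] at h2
    linarith
  · have hpow : IntegrableOn (fun x : ℝ => C * x ^ (-2 : ℝ)) (Ioi R) :=
      (integrableOn_Ioi_rpow_of_lt (by norm_num) hR).const_mul C
    refine hpow.mono' (hm.mono_set (Ioi_subset_Ioi hR.le)) ?_
    filter_upwards [ae_restrict_mem measurableSet_Ioi] with x hx
    have hx0 : 0 < x := hR.trans hx
    rw [Real.rpow_neg hx0.le]
    exact_mod_cast hb x (le_of_lt hx)

lemma summable_norm_samples {f : ℝ → ℂ}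
    (hdecay : ∀ N : ℕ, f =O[atTop] fun u : ℝ => u ^ (-(N : ℤ))) {u : ℝ} (hu : 0 < u) :
    Summable fun n : ℕ => ‖f ((n + 1) * u)‖ := by
  have ht : Tendsto (fun n : ℕ => ((n : ℝ) + 1) * u) atTop atTop :=
    (tendsto_atTop_add_const_right _ _ tendsto_natCast_atTop_atTop).atTop_mul_const hu
  have hO := ((hdecay 2).comp_tendsto ht).norm_left
  refine summable_of_isBigO_nat ?_ hO
  have hs := ((summable_nat_add_iff 1).2 (Real.summable_nat_pow_inv.2 one_lt_two)).mul_right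
    ((u ^ 2)⁻¹)
  refine hs.congr fun n => ?_
  simp only [Function.comp_apply, zpow_neg, zpow_natCast, mul_pow, mul_inv]
  push_cast
  rfl

/-- On the first `M` cells, the Riemann sum with mesh `u` differs from the integral by at most
`u` times the total variation. -/
lemma norm_riemann_sum_sub_integral_le {f : ℝ → ℂ} (hBV : BoundedVariationOn f (Ioi 0))
    (hf : IntegrableOn f (Ioi 0)) {u : ℝ} (hu : 0 < u) (M : ℕ) :
    ‖(u : ℂ) * ∑ n ∈ Finset.range M, f ((n + 1) * u) - ∫ t in (0 : ℝ)..(M * u), f t‖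
      ≤ (eVariationOn f (Ioi 0)).toReal * u := by
  have hii : ∀ n : ℕ, IntervalIntegrable f volume (n * u) ((n + 1 : ℕ) * u) := fun n => by
    have hle : (n : ℝ) * u ≤ (n + 1 : ℕ) * u := by push_cast; nlinarith
    rw [intervalIntegrable_iff_integrableOn_Ioc_of_le hle]
    exact hf.mono_set fun x hx => lt_of_le_of_lt (by positivity : (0 : ℝ) ≤ n * u) hx.1
  have hsplit : ∫ t in (0 : ℝ)..(M * u), f t
      = ∑ n ∈ Finset.range M, ∫ t in (0 : ℝ)..u, f (n * u + t) := by
    have h := intervalIntegral.sum_integral_adjacent_intervals (f := f) (μ := volume)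
      (a := fun n : ℕ => (n : ℝ) * u) (n := M) (fun k _ => hii k)
    simp only [Nat.cast_zero, zero_mul] at h
    rw [← h]
    refine Finset.sum_congr rfl fun n _ => ?_
    rw [intervalIntegral.integral_comp_add_left (fun t => f t)]
    push_cast
    congr 1 <;> ring
  have hii' : ∀ n : ℕ, IntervalIntegrable (fun t => f (n * u + t)) volume 0 u := fun n => by
    have := (hii n).comp_add_left (n * u)
    convert this using 1 <;> push_cast <;> ring
  have hdiff : (u : ℂ) * ∑ n ∈ Finset.range M, f ((n + 1) * u) - ∫ t in (0 : ℝ)..(M * u), f t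
      = ∫ t in (0 : ℝ)..u, ∑ n ∈ Finset.range M, (f ((n + 1) * u) - f (n * u + t)) := by
    rw [intervalIntegral.integral_finsetSum
      (fun n _ => intervalIntegrable_const.sub (hii' n)), hsplit, Finset.mul_sum,
      ← Finset.sum_sub_distrib]
    refine Finset.sum_congr rfl fun n _ => ?_
    rw [intervalIntegral.integral_sub intervalIntegrable_const (hii' n)]
    simp
  rw [hdiff]
  have := intervalIntegral.norm_integral_le_of_norm_le_const (a := (0 : ℝ)) (b := u)
    (C := (eVariationOn f (Ioi 0)).toReal)
    (f := fun t => ∑ n ∈ Finset.range M, (f ((n + 1) * u) - f (n * u + t))) ?_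
  · rwa [sub_zero, abs_of_pos hu] at this
  · intro t ht
    rw [uIoc_of_le hu.le] at ht
    exact (norm_sum_le _ _).trans (sum_norm_sub_le_variation hBV hu ht M)

lemma norm_tsum_le_variation {f : ℝ → ℂ} (hBV : BoundedVariationOn f (Ioi 0))
    (hdecay : ∀ N : ℕ, f =O[atTop] fun u : ℝ => u ^ (-(N : ℤ)))
    (hint : ∫ t in Ioi (0 : ℝ), f t = 0) {u : ℝ} (hu : 0 < u) :
    ‖∑' n : ℕ, f ((n + 1) * u)‖ ≤ (eVariationOn f (Ioi 0)).toReal := by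
  have hf := integrableOn_of_boundedVariationOn hBV hdecay
  have hsum : Tendsto (fun M : ℕ => ∑ n ∈ Finset.range M, f ((n + 1) * u)) atTop
      (nhds (∑' n : ℕ, f ((n + 1) * u))) :=
    (summable_norm_samples hdecay hu).of_norm.hasSum.tendsto_sum_nat
  have hI := intervalIntegral_tendsto_integral_Ioi 0 hf
    (tendsto_natCast_atTop_atTop.atTop_mul_const hu)
  rw [hint] at hI
  have hlim := ((hsum.const_mul (u : ℂ)).sub hI).norm
  have hle := le_of_tendsto hlim
    (Eventually.of_forall fun M => norm_riemann_sum_sub_integral_le hBV hf hu M)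
  rw [sub_zero, norm_mul, Complex.norm_real, Real.norm_of_nonneg hu.le, mul_comm] at hle
  exact le_of_mul_le_mul_right hle hu

lemma norm_Emap {f : ℝ → ℂ} {u : ℝ} (hu : 0 < u) :
    ‖Emap f u‖ = u ^ ((1 : ℝ) / 2) * ‖∑' n : ℕ, f ((n + 1) * u)‖ := by
  rw [Emap, norm_mul, Complex.norm_cpow_eq_rpow_re_of_pos hu]
  norm_num

theorem stmt2 (f : ℝ → ℂ)
    (hBV : BoundedVariationOn f (Ioi 0))
    (hdecay : ∀ N : ℕ, f =O[atTop] fun u : ℝ => u ^ (-(N:ℤ)))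
    (h0 : f =O[nhdsWithin 0 (Ioi 0)] fun u : ℝ => u ^ 2)
    (hint : ∫ t in Ioi (0:ℝ), f t = 0) :
    (∀ u : ℝ, 0 < u → Summable fun n : ℕ => ‖f ((n + 1) * u)‖) ∧
    (Emap f) =O[nhdsWithin 0 (Ioi 0)] (fun u : ℝ => u ^ ((1:ℝ)/2)) ∧
    (∀ N : ℕ, (Emap f) =O[atTop] fun u : ℝ => u ^ (-(N:ℤ))) := by
  refine ⟨fun u hu => summable_norm_samples hdecay hu, ?_, fun N => ?_⟩
  · refine IsBigO.of_bound (eVariationOn f (Ioi 0)).toReal ?_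
    filter_upwards [self_mem_nhdsWithin] with u hu
    have hu : 0 < u := hu
    rw [norm_Emap hu, Real.norm_of_nonneg (by positivity), mul_comm]
    gcongr
    exact norm_tsum_le_variation hBV hdecay hint hu
  -- The two extra powers absorb `u^{1/2} ≤ u^2` and make `∑ (n+1)^{-(N+2)}` converge.
  · obtain ⟨C, R, hC, hR, hb⟩ := exists_decay_bound hdecay (N + 2)
    have hs := (summable_nat_add_iff 1).2
      (Real.summable_nat_pow_inv.2 (show 1 < N + 2 by omega))
    set S := ∑' n : ℕ, (((n + 1 : ℕ) : ℝ) ^ (N + 2))⁻¹ with hS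
    have hS0 : 0 ≤ S := tsum_nonneg fun n => by positivity
    refine IsBigO.of_bound (C * S) ?_
    filter_upwards [eventually_ge_atTop R, eventually_ge_atTop 1] with u huR hu1
    have hu : 0 < u := one_pos.trans_le hu1
    have hbound : ‖∑' n : ℕ, f ((n + 1) * u)‖ ≤ C * (u ^ (N + 2))⁻¹ * S := by
      refine tsum_of_norm_bounded (hs.hasSum.mul_left (C * (u ^ (N + 2))⁻¹)) fun n => ?_
      have hn : R ≤ ((n : ℝ) + 1) * u := by
        have : (0 : ℝ) ≤ n * u := by positivity
        linarith
      refine (hb _ hn).trans (le_of_eq ?_)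
      rw [mul_pow, mul_inv]
      push_cast
      ring
    have hroot : u ^ ((1 : ℝ) / 2) ≤ u ^ 2 := by
      rw [← Real.rpow_natCast]
      exact Real.rpow_le_rpow_of_exponent_le hu1 (by norm_num)
    rw [norm_Emap hu, zpow_neg, zpow_natCast, Real.norm_of_nonneg (by positivity)]
    calc u ^ ((1 : ℝ) / 2) * ‖∑' n : ℕ, f ((n + 1) * u)‖
        ≤ u ^ 2 * (C * (u ^ (N + 2))⁻¹ * S) := by gcongr
      _ = C * S * (u ^ N)⁻¹ := by
        rw [pow_add]
        field_simp
end

section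
/- Let z₀ ∈ ℂ with |Im(z₀)| < 1/2. If ∫₀^∞ (ℰf)(u) u^{−iz₀} d*u = 0 for every even Schwartz function f : ℝ → ℂ with ∫_ℝ f(x) dx = 0, then ζ(1/2 − iz₀) = 0. -/
/-!
The hypothesis is tested on a single function, `f x = exp (-π x²) - 2 exp (-4π x²)`, an even
Schwartz function of integral zero.  With `s = 1/2 - i z₀`, so that `0 < re s < 1`, the vanishing
integral is the Mellin transform at `s` of `u ↦ ∑_{n ≥ 1} f (n u)`, and this function is
`Φ (u²) / 2` with `Φ t = (θ t - 1) - 2 (θ (4 t) - 1)`, where `θ t = ∑_{n ∈ ℤ} exp (-π n² t)`.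

By the functional equation of `θ`, the two terms of order `t ^ (-1/2)` in `Φ` cancel at `0`, so `Φ`
is bounded there and its Mellin transform is holomorphic on `re w > 0`.  For `re w > 1/2` it equals
`(1 - 2 · 4 ^ (-w)) Λ w`, where `Λ w` is twice the completed zeta function at `2 w`.  The identity
theorem carries this to `re w > 0` (`mul_mellin_thetaDiff`), once both sides are multiplied by
`w (1/2 - w)` to remove the poles.  At `w = s / 2` the factor `1 - 2 · 4 ^ (-w)` is nonzero, because
`|4 ^ (-w)| = 2 ^ (-re s) > 1/2`; hence the completed zeta function vanishes at `s`, and so does `ζ`.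
-/

open MeasureTheory Set

open Filter Topology Asymptotics HurwitzZeta

/-! ### Gaussians as Schwartz functions -/

lemma gaussian_poly_bound {b : ℝ} (hb : 0 < b) (k : ℕ) (Q : Polynomial ℝ) :
    ∃ C, ∀ x : ℝ, |x| ^ k * |Q.eval x * Real.exp (-b * x ^ 2)| ≤ C := by
  induction Q using Polynomial.induction_on' with
  | add p q hp hq =>
    obtain ⟨C, hC⟩ := hp
    obtain ⟨D, hD⟩ := hq
    refine ⟨C + D, fun x => ?_⟩
    rw [Polynomial.eval_add, add_mul]
    calc _ ≤ |x| ^ k * (|p.eval x * Real.exp (-b * x ^ 2)|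
            + |q.eval x * Real.exp (-b * x ^ 2)|) := by
          gcongr; exact abs_add_le _ _
      _ ≤ C + D := by rw [mul_add]; exact add_le_add (hC x) (hD x)
  | monomial n a =>
    refine ⟨|a| * (1 + (k + n).factorial / b ^ (k + n)), fun x => ?_⟩
    set m := k + n with hm
    have h1 : |x| ^ m ≤ 1 + (x ^ 2) ^ m := by
      have h := sq_nonneg (|x| ^ m - 1)
      have h2 : (x ^ 2) ^ m = (|x| ^ m) ^ 2 := by rw [← sq_abs, ← pow_mul, ← pow_mul, mul_comm]
      have h3 : 0 ≤ |x| ^ m := by positivity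
      nlinarith
    have h2 : (x ^ 2) ^ m * Real.exp (-b * x ^ 2) ≤ m.factorial / b ^ m := by
      have h := Real.pow_div_factorial_le_exp (b * x ^ 2) (by positivity) m
      rw [div_le_iff₀ (by positivity), mul_pow] at h
      rw [le_div_iff₀ (by positivity), neg_mul, Real.exp_neg]
      have he := Real.exp_pos (b * x ^ 2)
      calc _ = b ^ m * (x ^ 2) ^ m / Real.exp (b * x ^ 2) := by field_simp
        _ ≤ _ := by rw [div_le_iff₀ he]; linarith
    have h3 : Real.exp (-b * x ^ 2) ≤ 1 := by
      rw [Real.exp_le_one_iff]; nlinarith [sq_nonneg x, mul_nonneg hb.le (sq_nonneg x)]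
    rw [Polynomial.eval_monomial, abs_mul, abs_mul, abs_pow, abs_of_pos (Real.exp_pos _)]
    calc _ = |a| * (|x| ^ m * Real.exp (-b * x ^ 2)) := by rw [hm, pow_add]; ring
      _ ≤ |a| * ((1 + (x ^ 2) ^ m) * Real.exp (-b * x ^ 2)) := by gcongr
      _ ≤ _ := by gcongr; linarith

lemma iteratedDeriv_gaussian (b : ℝ) (n : ℕ) : ∃ Q : Polynomial ℝ,
    iteratedDeriv n (fun x : ℝ => ((Real.exp (-b * x ^ 2) : ℝ) : ℂ)) =
      fun x => ((Q.eval x * Real.exp (-b * x ^ 2) : ℝ) : ℂ) := by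
  induction n with
  | zero => exact ⟨1, by simp⟩
  | succ n ih =>
    obtain ⟨Q, hQ⟩ := ih
    refine ⟨Q.derivative - Polynomial.C (2 * b) * Polynomial.X * Q, ?_⟩
    rw [iteratedDeriv_succ, hQ]
    funext x
    apply HasDerivAt.deriv
    apply HasDerivAt.ofReal_comp
    have h := (Q.hasDerivAt x).mul (((hasDerivAt_pow 2 x).const_mul (-b)).exp)
    refine h.congr_deriv ?_
    simp only [Polynomial.eval_sub, Polynomial.eval_mul, Polynomial.eval_C, Polynomial.eval_X]
    push_cast
    ring

/-- The Gaussian `x ↦ exp (-b x²)` as a complex-valued Schwartz function. -/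
noncomputable def gaussianSchwartz (b : ℝ) (hb : 0 < b) : SchwartzMap ℝ ℂ where
  toFun x := ((Real.exp (-b * x ^ 2) : ℝ) : ℂ)
  smooth' := by
    have h : ContDiff ℝ (⊤ : ℕ∞) (fun x : ℝ => Real.exp (-b * x ^ 2)) := by fun_prop
    exact Complex.ofRealCLM.contDiff.comp h
  decay' k n := by
    obtain ⟨Q, hQ⟩ := iteratedDeriv_gaussian b n
    obtain ⟨C, hC⟩ := gaussian_poly_bound hb k Q
    refine ⟨C, fun x => ?_⟩
    rw [norm_iteratedFDeriv_eq_norm_iteratedDeriv, hQ, Complex.norm_real]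
    exact hC x

lemma gaussianSchwartz_apply (b : ℝ) (hb : 0 < b) (x : ℝ) :
    gaussianSchwartz b hb x = ((Real.exp (-b * x ^ 2) : ℝ) : ℂ) := rfl

lemma integral_gaussianSchwartz (b : ℝ) (hb : 0 < b) :
    ∫ x : ℝ, gaussianSchwartz b hb x = ((Real.sqrt (Real.pi / b) : ℝ) : ℂ) := by
  simp_rw [gaussianSchwartz_apply]
  rw [integral_complex_ofReal, integral_gaussian]

/-- The test function `x ↦ exp (-π x²) - 2 exp (-4π x²)`. -/
noncomputable def testFun : SchwartzMap ℝ ℂ :=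
  gaussianSchwartz Real.pi Real.pi_pos -
    (2 : ℂ) • gaussianSchwartz (4 * Real.pi) (by positivity)

lemma testFun_apply (x : ℝ) : testFun x =
    ((Real.exp (-Real.pi * x ^ 2) : ℝ) : ℂ) - 2 * ((Real.exp (-(4 * Real.pi) * x ^ 2) : ℝ) : ℂ) :=
  rfl

lemma integral_testFun : ∫ x : ℝ, testFun x = 0 := by
  have h : ∀ x, testFun x = gaussianSchwartz Real.pi Real.pi_pos x -
    2 * gaussianSchwartz (4 * Real.pi) (by positivity) x := fun x => rfl
  simp_rw [h]
  rw [integral_sub (SchwartzMap.integrable _) ((SchwartzMap.integrable _).const_mul _),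
    integral_const_mul, integral_gaussianSchwartz, integral_gaussianSchwartz,
    div_self Real.pi_ne_zero, show Real.pi / (4 * Real.pi) = (1 / 2) ^ 2 by field_simp; norm_num,
    Real.sqrt_sq (by norm_num)]
  simp

/-! ### The theta combination and its Mellin transform -/

/-- `Φ t = (θ t - 1) - 2 (θ (4 t) - 1)`, where `θ = evenKernel 0` is the Jacobi theta function
`t ↦ ∑_{n ∈ ℤ} exp (-π n² t)`. -/
noncomputable def thetaDiff (t : ℝ) : ℂ :=
  ((evenKernel 0 t : ℂ) - 1) - 2 * ((evenKernel 0 (4 * t) : ℂ) - 1)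

lemma hasSum_evenKernel_zero {t : ℝ} (ht : 0 < t) :
    HasSum (fun n : ℕ => ((Real.exp (-Real.pi * (n + 1) ^ 2 * t) : ℝ) : ℂ))
      (((evenKernel 0 t : ℂ) - 1) / 2) := by
  have h := hasSum_nat_cosKernel₀ 0 ht
  rw [QuotientAddGroup.mk_zero, ← evenKernel_eq_cosKernel_of_zero] at h
  have h' := (Complex.hasSum_ofReal.mpr h).div_const 2
  push_cast at h' ⊢
  simpa using h'

lemma tsum_testFun {u : ℝ} (hu : 0 < u) :
    ∑' n : ℕ, testFun ((n + 1) * u) = thetaDiff (u ^ (2 : ℝ)) / 2 := by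
  have h1 := hasSum_evenKernel_zero (t := u ^ 2) (by positivity)
  have h2 := (hasSum_evenKernel_zero (t := 4 * u ^ 2) (by positivity)).mul_left 2
  rw [Real.rpow_two]
  refine HasSum.tsum_eq ?_
  have hval : thetaDiff (u ^ 2) / 2 = ((evenKernel 0 (u ^ 2) : ℂ) - 1) / 2 -
      2 * (((evenKernel 0 (4 * u ^ 2) : ℂ) - 1) / 2) := by
    rw [thetaDiff]; ring
  rw [hval]
  refine (h1.sub h2).congr_fun fun n => ?_
  rw [testFun_apply]
  ring_nf

lemma continuousOn_thetaDiff : ContinuousOn thetaDiff (Ioi 0) := by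
  have h := Complex.continuous_ofReal.comp_continuousOn (continuousOn_evenKernel 0)
  have h4 : ContinuousOn (fun t : ℝ => (evenKernel 0 (4 * t) : ℂ)) (Ioi 0) :=
    h.comp (f := fun t : ℝ => 4 * t) (by fun_prop) (fun t (ht : 0 < t) => by
      simp only [mem_Ioi]; positivity)
  exact (h.sub continuousOn_const).sub (continuousOn_const.mul (h4.sub continuousOn_const))

lemma thetaDiff_isBigO_atTop (a : ℝ) : thetaDiff =O[atTop] (· ^ (-a) : ℝ → ℝ) := by
  have h : (fun t : ℝ => (evenKernel 0 t : ℂ) - 1) =O[atTop] (· ^ (-a) : ℝ → ℝ) := by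
    simpa [hurwitzEvenFEPair] using (hurwitzEvenFEPair 0).hf_top (-a)
  have ht : Tendsto (fun t : ℝ => 4 * t) atTop atTop :=
    tendsto_id.const_mul_atTop (by norm_num)
  have h4 : (fun t : ℝ => (evenKernel 0 (4 * t) : ℂ) - 1) =O[atTop] (· ^ (-a) : ℝ → ℝ) := by
    refine (h.comp_tendsto ht).trans ?_
    refine IsBigO.of_bound ((4 : ℝ) ^ (-a)) ?_
    filter_upwards [eventually_gt_atTop 0] with t ht
    simp only [Function.comp_apply]
    rw [Real.mul_rpow (by norm_num) ht.le, norm_mul, Real.norm_of_nonneg (by positivity)]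
  exact h.sub (h4.const_mul_left 2)

/-- Boundedness at `0`: the leading terms `t ^ (-1/2)` of `θ t` and `2 (4 t) ^ (-1/2)` of
`2 θ (4 t)` are equal. -/
lemma thetaDiff_isBigO_zero : thetaDiff =O[𝓝[>] 0] (· ^ (-(0 : ℝ)) : ℝ → ℝ) := by
  have h : (fun t : ℝ => (evenKernel 0 t : ℂ) - ((t ^ (-(1 / 2 : ℝ)) : ℝ) : ℂ)) =O[𝓝[>] 0]
      (fun _ : ℝ => (1 : ℝ)) := by
    simpa [hurwitzEvenFEPair] using (hurwitzEvenFEPair 0).hf_zero 0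
  have ht : Tendsto (fun t : ℝ => 4 * t) (𝓝[>] 0) (𝓝[>] 0) := by
    refine tendsto_nhdsWithin_iff.mpr ⟨?_, ?_⟩
    · have : Tendsto (fun t : ℝ => 4 * t) (𝓝 0) (𝓝 (4 * 0)) := by
        exact (continuous_const.mul continuous_id).tendsto 0
      rw [mul_zero] at this
      exact this.mono_left nhdsWithin_le_nhds
    · filter_upwards [self_mem_nhdsWithin] with t (ht : 0 < t)
      simp only [mem_Ioi]; positivity
  have h4 := h.comp_tendsto ht
  have hsum := (h.sub (h4.const_mul_left 2)).add
    (isBigO_const_const (1 : ℂ) (one_ne_zero (α := ℝ)) (𝓝[>] (0 : ℝ)))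
  simp only [neg_zero, Real.rpow_zero]
  refine hsum.congr' ?_ EventuallyEq.rfl
  filter_upwards [self_mem_nhdsWithin] with t (ht : 0 < t)
  have h2 : (4 : ℝ) ^ (-(1 / 2 : ℝ)) = 1 / 2 := by
    rw [Real.rpow_neg (by norm_num), ← Real.sqrt_eq_rpow,
      show (4 : ℝ) = 2 ^ 2 by norm_num, Real.sqrt_sq (by norm_num)]
    norm_num
  simp only [Function.comp_apply, thetaDiff]
  rw [Real.mul_rpow (by norm_num) ht.le, h2]
  push_cast
  ring

lemma differentiableAt_mellin_thetaDiff {w : ℂ} (hw : 0 < w.re) :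
    DifferentiableAt ℂ (mellin thetaDiff) w :=
  mellin_differentiableAt_of_isBigO_rpow
    (continuousOn_thetaDiff.locallyIntegrableOn measurableSet_Ioi)
    (thetaDiff_isBigO_atTop (w.re + 1)) (by linarith) thetaDiff_isBigO_zero hw

lemma mellin_thetaDiff_of_half_lt {w : ℂ} (hw : 1 / 2 < w.re) :
    mellin thetaDiff w = (1 - 2 * (4 : ℂ) ^ (-w)) * (hurwitzEvenFEPair 0).Λ w := by
  have h : HasMellin (fun t : ℝ => (evenKernel 0 t : ℂ) - 1) w ((hurwitzEvenFEPair 0).Λ w) := by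
    simpa [hurwitzEvenFEPair] using (hurwitzEvenFEPair 0).hasMellin (s := w) hw
  have hc4 := (MellinConvergent.comp_mul_left (s := w) (by norm_num : (0 : ℝ) < 4)).mpr h.1
  have hm4 := mellin_comp_mul_left (fun t : ℝ => (evenKernel 0 t : ℂ) - 1) w
    (by norm_num : (0 : ℝ) < 4)
  have h2 := hasMellin_const_smul hc4 (2 : ℂ)
  have h3 := (hasMellin_sub h.1 h2.1).2
  rw [h2.2, hm4, h.2] at h3
  simp only [smul_eq_mul] at h3
  push_cast at h3
  calc _ = _ := h3
    _ = _ := by ring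

lemma mul_Λ {w : ℂ} (h0 : w ≠ 0) (h1 : w ≠ 1 / 2) :
    w * (1 / 2 - w) * (hurwitzEvenFEPair 0).Λ w =
      w * (1 / 2 - w) * (hurwitzEvenFEPair 0).Λ₀ w - 1 / 2 := by
  have h2 : 1 / 2 - w ≠ 0 := sub_ne_zero.mpr h1.symm
  have h := (hurwitzEvenFEPair 0).Λ₀_eq w
  have h' : (hurwitzEvenFEPair 0).Λ₀ w = (hurwitzEvenFEPair 0).Λ w + 1 / w + 1 / (1 / 2 - w) := by
    rw [h]; simp [hurwitzEvenFEPair]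
  rw [h']
  linear_combination (-(1 / 2 - w)) * mul_one_div_cancel h0 - w * mul_one_div_cancel h2

/-- The Mellin transform of `Φ` on the half-plane `re w > 0`.  The factor `w (1/2 - w)` and the use
of the entire function `Λ₀` keep both sides holomorphic, including at the pole `w = 1/2` of `Λ`. -/
lemma mul_mellin_thetaDiff {w : ℂ} (hw : 0 < w.re) :
    w * (1 / 2 - w) * mellin thetaDiff w =
      (1 - 2 * (4 : ℂ) ^ (-w)) * (w * (1 / 2 - w) * (hurwitzEvenFEPair 0).Λ₀ w - 1 / 2) := by
  have ho : IsOpen {w : ℂ | 0 < w.re} := isOpen_lt continuous_const Complex.continuous_re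
  have hd1 : DifferentiableOn ℂ (fun w : ℂ => w * (1 / 2 - w) * mellin thetaDiff w)
      {w : ℂ | 0 < w.re} := fun w hw =>
    ((by fun_prop : DifferentiableAt ℂ (fun w : ℂ => w * (1 / 2 - w)) w).mul
      (differentiableAt_mellin_thetaDiff hw)).differentiableWithinAt
  have hΛ := (hurwitzEvenFEPair 0).differentiable_Λ₀
  have hpow : Differentiable ℂ (fun w : ℂ => (4 : ℂ) ^ (-w)) := fun w =>
    (differentiableAt_id.neg).const_cpow (Or.inl (by norm_num))
  have hd2 : DifferentiableOn ℂ (fun w : ℂ => (1 - 2 * (4 : ℂ) ^ (-w)) *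
      (w * (1 / 2 - w) * (hurwitzEvenFEPair 0).Λ₀ w - 1 / 2)) {w : ℂ | 0 < w.re} := by
    apply Differentiable.differentiableOn
    fun_prop
  have hconn : IsPreconnected {w : ℂ | 0 < w.re} :=
    (convex_halfSpace_re_gt 0).isPreconnected
  refine (hd1.analyticOnNhd ho).eqOn_of_preconnected_of_eventuallyEq (hd2.analyticOnNhd ho) hconn
    (z₀ := 1) (by simp) ?_ hw
  have hn : {w : ℂ | 1 / 2 < w.re} ∈ 𝓝 (1 : ℂ) :=
    (isOpen_lt continuous_const Complex.continuous_re).mem_nhds (by norm_num)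
  filter_upwards [hn] with w (hw : 1 / 2 < w.re)
  have h0 : w ≠ 0 := by rintro rfl; norm_num at hw
  have h1 : w ≠ 1 / 2 := by rintro rfl; norm_num at hw
  rw [mellin_thetaDiff_of_half_lt hw, ← mul_Λ h0 h1]
  ring

lemma riemannZeta_eq_zero_of_mellin {s : ℂ} (h0 : 0 < s.re) (h1 : s.re < 1)
    (h : mellin thetaDiff (s / 2) = 0) : riemannZeta s = 0 := by
  have hre : (s / 2).re = s.re / 2 := by simp
  have hw0 : s / 2 ≠ 0 := by
    intro hs; rw [hs] at hre; simp at hre; linarith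
  have hw1 : s / 2 ≠ 1 / 2 := by
    intro hs; rw [hs] at hre; norm_num at hre; linarith
  have hm := mul_mellin_thetaDiff (w := s / 2) (by rw [hre]; linarith)
  rw [h, mul_zero, ← mul_Λ hw0 hw1] at hm
  have hpow : 1 - 2 * (4 : ℂ) ^ (-(s / 2)) ≠ 0 := by
    intro hz
    have h2 : (4 : ℂ) ^ (-(s / 2)) = 1 / 2 := by linear_combination (-1 / 2 : ℂ) * hz
    have hn := congrArg norm h2
    have h4 := Complex.norm_cpow_eq_rpow_re_of_pos (by norm_num : (0 : ℝ) < 4) (-(s / 2))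
    push_cast at h4
    rw [h4, Complex.neg_re, hre] at hn
    have hlt : (4 : ℝ) ^ (-(1 / 2 : ℝ)) < (4 : ℝ) ^ (-(s.re / 2)) :=
      Real.rpow_lt_rpow_of_exponent_lt (by norm_num) (by linarith)
    rw [Real.rpow_neg (by norm_num), ← Real.sqrt_eq_rpow,
      show Real.sqrt 4 = 2 by
        rw [show (4 : ℝ) = 2 ^ 2 by norm_num, Real.sqrt_sq (by norm_num)], hn] at hlt
    norm_num at hlt
  have hΛ : (hurwitzEvenFEPair 0).Λ (s / 2) = 0 := by
    rcases mul_eq_zero.mp hm.symm with h | h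
    · exact absurd h hpow
    · exact (mul_eq_zero.mp h).resolve_left (mul_ne_zero hw0 (sub_ne_zero.mpr hw1.symm))
  have hs0 : s ≠ 0 := by rintro rfl; simp at h0
  rw [riemannZeta_def_of_ne_zero hs0, completedRiemannZeta, completedHurwitzZetaEven, hΛ]
  simp

theorem stmt5 (z₀ : ℂ) (him : |z₀.im| < 1/2)
    (hvanish : ∀ f : SchwartzMap ℝ ℂ, (∀ x : ℝ, f (-x) = f x) → (∫ x : ℝ, f x = 0) →
      ∫ u in Ioi (0:ℝ), Emap (⇑f) u * (u : ℂ) ^ (-(Complex.I * z₀)) / (u : ℂ) = 0) :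
    riemannZeta (1/2 - Complex.I * z₀) = 0 := by
  have hv := hvanish testFun (fun x => by simp [testFun_apply]) integral_testFun
  set s : ℂ := 1 / 2 - Complex.I * z₀ with hs
  have hre : s.re = 1 / 2 + z₀.im := by simp [hs]
  rw [abs_lt] at him
  have hI : ∫ u in Ioi (0:ℝ), Emap (⇑testFun) u * (u : ℂ) ^ (-(Complex.I * z₀)) / (u : ℂ) =
      mellin (fun u : ℝ => thetaDiff (u ^ (2 : ℝ)) / 2) s := by
    rw [mellin]
    refine setIntegral_congr_fun measurableSet_Ioi fun u (hu : 0 < u) => ?_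
    have hu0 : (u : ℂ) ≠ 0 := Complex.ofReal_ne_zero.mpr hu.ne'
    have hp : (u : ℂ) ^ (s - 1) = (u : ℂ) ^ ((1 : ℂ) / 2) * (u : ℂ) ^ (-(Complex.I * z₀)) / u := by
      rw [← Complex.cpow_add _ _ hu0, Complex.cpow_sub _ _ hu0, Complex.cpow_one, hs, sub_eq_add_neg]
    simp only [Emap, smul_eq_mul]
    rw [tsum_testFun hu, hp]
    ring
  rw [hI, mellin_div_const, mellin_comp_rpow] at hv
  refine riemannZeta_eq_zero_of_mellin (by linarith) (by linarith) ?_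
  simpa using hv
end

section
/- Let f(x) = e^{−πx²}(2πx² − 1). Then f is an even Schwartz function with ∫_ℝ f(x) dx = 0, and for every z ∈ ℂ with Im(z) > −1/2 one has ψ_f(z) = (1/4) · π^{−1/4 + iz/2} · (−1 − 2iz) · Γ(1/4 − iz/2); in particular ψ_f(z) ≠ 0 for every z with |Im(z)| < 1/2. -/
/-!
Everything is deduced from two facts about functions `P(x) e^{-πx²}` with `P` a polynomial.

* This class is stable under differentiation (`P ↦ P' - 2πXP`), and each member times a power of
  `|x|` is bounded, because `t ^ k / k! ≤ e ^ t` for `t = x²`. Hence every member is Schwartz. The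
  function `f6` is such a member, and it is the derivative of another one, `-x e^{-πx²}`, so its
  integral vanishes.
* The Mellin transform of the Gaussian at `s` is `π^{-s/2} Γ(s/2) / 2` for `Re s > 0`
  (`mellin_gaussian`). Writing `ψ_f(z)` with `s = 1/2 - iz` as `2π` times this value at `s + 2`
  minus the value at `s`, the relation `Γ(s/2 + 1) = (s/2) Γ(s/2)` produces the factor `(s - 1) / 2`
  and the stated formula. In the strip `|Im z| < 1/2` we have `0 < Re s < 1`, so neither
  `s - 1` nor `Γ(s/2)` vanishes.
-/


open MeasureTheory Set

/-- The function `f(x) = e^{-π x²}(2π x² - 1)`. -/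
noncomputable def f6 (x : ℝ) : ℂ :=
  Real.exp (-(Real.pi * x ^ 2)) * (2 * Real.pi * x ^ 2 - 1)

open Polynomial in
/-- The function `x ↦ P(x) e^{-πx²}` on the real line. -/
noncomputable def polyGauss (P : ℂ[X]) (x : ℝ) : ℂ :=
  P.eval (x : ℂ) * Real.exp (-(Real.pi * x ^ 2))

open Polynomial in
/-- The polynomial `P' - 2πXP`, so that `(P e^{-πx²})' = (P' - 2πXP) e^{-πx²}`. -/
noncomputable def gaussD (P : ℂ[X]) : ℂ[X] :=
  derivative P - C (2 * (Real.pi : ℂ)) * X * P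

open Polynomial in
lemma polyGauss_hasDerivAt (P : ℂ[X]) (x : ℝ) :
    HasDerivAt (polyGauss P) (polyGauss (gaussD P) x) x := by
  have h1 : HasDerivAt (fun y : ℝ => P.eval (y : ℂ)) ((derivative P).eval (x : ℂ)) x :=
    (P.hasDerivAt (x : ℂ)).comp_ofReal
  have h2 : HasDerivAt (fun y : ℝ => Real.exp (-(Real.pi * y ^ 2)))
      (Real.exp (-(Real.pi * x ^ 2)) * (-(Real.pi * (2 * x)))) x := by
    have := (((hasDerivAt_pow 2 x).const_mul Real.pi).neg).exp
    simpa using this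
  have h := h1.mul h2.ofReal_comp
  refine h.congr_deriv ?_
  simp only [polyGauss, gaussD, eval_sub, eval_mul, eval_C, eval_X]
  push_cast
  ring

open Polynomial in
lemma polyGauss_iteratedDeriv (n : ℕ) (P : ℂ[X]) :
    iteratedDeriv n (polyGauss P) = polyGauss (gaussD^[n] P) := by
  induction n with
  | zero => simp
  | succ n ih =>
    rw [iteratedDeriv_succ, ih, Function.iterate_succ_apply']
    exact funext fun x => (polyGauss_hasDerivAt _ x).deriv

lemma abs_pow_mul_gaussian_le (k : ℕ) (x : ℝ) :
    |x| ^ k * Real.exp (-(Real.pi * x ^ 2)) ≤ 1 + k.factorial := by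
  have hexp : Real.exp (-(Real.pi * x ^ 2)) ≤ Real.exp (-(x ^ 2)) := by
    apply Real.exp_le_exp.mpr
    nlinarith [Real.pi_gt_three, sq_nonneg x]
  have hpow : |x| ^ k ≤ 1 + (x ^ 2) ^ k := by
    have h : (x ^ 2) ^ k = (|x| ^ k) ^ 2 := by
      rw [← sq_abs, ← pow_mul, ← pow_mul, mul_comm]
    rw [h]
    nlinarith [sq_nonneg (|x| ^ k - 1), sq_nonneg (|x| ^ k)]
  have hfac : (x ^ 2) ^ k ≤ k.factorial * Real.exp (x ^ 2) := by
    have := Real.pow_div_factorial_le_exp (x ^ 2) (sq_nonneg x) k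
    rwa [div_le_iff₀' (by positivity)] at this
  have h1 : (1 : ℝ) ≤ Real.exp (x ^ 2) := Real.one_le_exp (sq_nonneg x)
  calc |x| ^ k * Real.exp (-(Real.pi * x ^ 2))
      ≤ ((1 + k.factorial) * Real.exp (x ^ 2)) * Real.exp (-(x ^ 2)) := by
        apply mul_le_mul _ hexp (Real.exp_pos _).le (by positivity)
        linarith
    _ = 1 + k.factorial := by
        rw [mul_assoc, ← Real.exp_add]; simp

open Polynomial in
lemma polyGauss_decay (P : ℂ[X]) (k : ℕ) : ∃ C : ℝ, ∀ x : ℝ, |x| ^ k * ‖polyGauss P x‖ ≤ C := by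
  induction P using Polynomial.induction_on' with
  | add p q hp hq =>
    obtain ⟨A, hA⟩ := hp
    obtain ⟨B, hB⟩ := hq
    refine ⟨A + B, fun x => ?_⟩
    have h : polyGauss (p + q) x = polyGauss p x + polyGauss q x := by
      simp [polyGauss, add_mul]
    rw [h]
    calc _ ≤ |x| ^ k * (‖polyGauss p x‖ + ‖polyGauss q x‖) := by
          gcongr
          exact norm_add_le _ _
      _ ≤ A + B := by rw [mul_add]; exact add_le_add (hA x) (hB x)
  | monomial n a =>
    refine ⟨‖a‖ * (1 + (k + n).factorial), fun x => ?_⟩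
    have h : ‖polyGauss (monomial n a) x‖ =
        ‖a‖ * |x| ^ n * Real.exp (-(Real.pi * x ^ 2)) := by
      rw [polyGauss, eval_monomial, norm_mul, norm_mul, norm_pow, Complex.norm_real,
        Complex.norm_real, Real.norm_eq_abs, Real.norm_eq_abs, Real.abs_exp]
    rw [h]
    calc _ = ‖a‖ * (|x| ^ (k + n) * Real.exp (-(Real.pi * x ^ 2))) := by ring
      _ ≤ _ := by
        gcongr
        exact abs_pow_mul_gaussian_le (k + n) x

open Polynomial in
lemma exists_schwartz_polyGauss (P : ℂ[X]) : ∃ F : SchwartzMap ℝ ℂ, ⇑F = polyGauss P := by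
  refine ⟨⟨polyGauss P, ?_, fun k n => ?_⟩, rfl⟩
  · apply contDiff_of_differentiable_iteratedDeriv
    intro m _
    rw [polyGauss_iteratedDeriv]
    exact fun x => (polyGauss_hasDerivAt _ x).differentiableAt
  · obtain ⟨C, hC⟩ := polyGauss_decay (gaussD^[n] P) k
    refine ⟨C, fun x => ?_⟩
    rw [norm_iteratedFDeriv_eq_norm_iteratedDeriv, polyGauss_iteratedDeriv]
    exact hC x

open Polynomial in
lemma integrable_polyGauss (P : ℂ[X]) : Integrable (polyGauss P) := by
  obtain ⟨F, hF⟩ := exists_schwartz_polyGauss P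
  exact hF ▸ F.integrable

open Polynomial in
/-- `f6` is the derivative of `-x e^{-πx²}`. -/
lemma f6_eq_polyGauss : f6 = polyGauss (gaussD (-X)) := by
  funext x
  simp only [f6, polyGauss, gaussD, derivative_neg, derivative_X, eval_sub, eval_neg, eval_mul,
    eval_C, eval_X, eval_one]
  ring

/-- Obtained from the Gamma integral by the substitution `u ↦ u²`. -/
lemma mellin_gaussian {s : ℂ} (hs : 0 < s.re) :
    ∫ u in Ioi (0 : ℝ), (u : ℂ) ^ (s - 1) * Real.exp (-(Real.pi * u ^ 2)) =
      1 / 2 * ((Real.pi : ℂ) ^ (-(s / 2)) * Complex.Gamma (s / 2)) := by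
  have h := mellin_comp_rpow (fun t : ℝ => Complex.exp (-((Real.pi : ℂ) * t))) s 2
  have hs2 : 0 < (s / 2).re := by simpa using hs
  simp only [mellin, smul_eq_mul, Complex.ofReal_ofNat] at h
  rw [Complex.integral_cpow_mul_exp_neg_mul_Ioi hs2 Real.pi_pos] at h
  have hpi : (1 / (Real.pi : ℂ)) ^ (s / 2) = (Real.pi : ℂ) ^ (-(s / 2)) := by
    rw [one_div, Complex.inv_cpow, Complex.cpow_neg]
    rw [Complex.arg_ofReal_of_nonneg Real.pi_pos.le]
    exact Real.pi_pos.ne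
  rw [hpi] at h
  convert h using 1
  · refine setIntegral_congr_fun measurableSet_Ioi fun u _ => ?_
    simp
  · simp

lemma integrableOn_mellin_gaussian {s : ℂ} (hs : 0 < s.re) :
    IntegrableOn (fun u : ℝ => (u : ℂ) ^ (s - 1) * Real.exp (-(Real.pi * u ^ 2))) (Ioi 0) := by
  -- A non-integrable function has integral `0` by convention, and the value here is nonzero.
  apply Integrable.of_integral_ne_zero
  rw [mellin_gaussian hs]
  have hpi : (Real.pi : ℂ) ≠ 0 := Complex.ofReal_ne_zero.mpr Real.pi_ne_zero
  have hG : Complex.Gamma (s / 2) ≠ 0 := Complex.Gamma_ne_zero_of_re_pos (by simpa using hs)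
  have hc : (Real.pi : ℂ) ^ (-(s / 2)) ≠ 0 := by simp [Complex.cpow_eq_zero_iff, hpi]
  simp [hG, hc]

lemma psi_f6_eq (z : ℂ) (hz : -(1/2) < z.im) :
    psi f6 z = (1/4) * (Real.pi : ℂ) ^ (-(1/4 : ℂ) + Complex.I * z / 2) *
        (-1 - 2 * Complex.I * z) * Complex.Gamma (1/4 - Complex.I * z / 2) := by
  have hpi : (Real.pi : ℂ) ≠ 0 := Complex.ofReal_ne_zero.mpr Real.pi_ne_zero
  obtain ⟨s, hsdef⟩ : ∃ s : ℂ, s = 1/2 - Complex.I * z := ⟨_, rfl⟩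
  have hs : 0 < s.re := by
    rw [hsdef]
    simp
    linarith
  have hs' : 0 < (s + 2).re := by
    rw [Complex.add_re, Complex.re_ofNat]
    linarith
  have hs0 : s / 2 ≠ 0 := by
    intro h
    have : s = 0 := by simpa using h
    simp [this] at hs
  have key : psi f6 z = ∫ u in Ioi (0 : ℝ),
      (2 * (Real.pi : ℂ) * ((u : ℂ) ^ (s + 2 - 1) * Real.exp (-(Real.pi * u ^ 2))) -
        (u : ℂ) ^ (s - 1) * Real.exp (-(Real.pi * u ^ 2))) := by
    refine setIntegral_congr_fun measurableSet_Ioi fun u hu => ?_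
    have hu0 : (u : ℂ) ≠ 0 := Complex.ofReal_ne_zero.mpr (ne_of_gt hu)
    have e1 : (u : ℂ) ^ (s + 2 - 1) = (u : ℂ) ^ s * u := by
      rw [show s + 2 - 1 = s + 1 by ring, Complex.cpow_add _ _ hu0, Complex.cpow_one]
    have e2 : (u : ℂ) ^ (s - 1) = (u : ℂ) ^ s / u := by
      rw [Complex.cpow_sub _ _ hu0, Complex.cpow_one]
    simp only [f6]
    rw [← hsdef, e1, e2]
    field_simp
  rw [key, integral_sub ((integrableOn_mellin_gaussian hs').const_mul _)
    (integrableOn_mellin_gaussian hs), integral_const_mul, mellin_gaussian hs,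
    mellin_gaussian hs']
  have g1 : Complex.Gamma ((s + 2) / 2) = s / 2 * Complex.Gamma (s / 2) := by
    rw [show (s + 2) / 2 = s / 2 + 1 by ring, Complex.Gamma_add_one _ hs0]
  have g2 : (Real.pi : ℂ) ^ (-((s + 2) / 2)) = (Real.pi : ℂ) ^ (-(s / 2)) / Real.pi := by
    rw [show -((s + 2) / 2) = -(s / 2) - 1 by ring, Complex.cpow_sub _ _ hpi, Complex.cpow_one]
  rw [g1, g2, show -(1/4 : ℂ) + Complex.I * z / 2 = -(s / 2) by rw [hsdef]; ring,
    show (1/4 : ℂ) - Complex.I * z / 2 = s / 2 by rw [hsdef]; ring,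
    show -1 - 2 * Complex.I * z = 2 * (s - 1) by rw [hsdef]; ring]
  field_simp
  ring

theorem stmt6 :
    (∃ F : SchwartzMap ℝ ℂ, ⇑F = f6) ∧
    (∀ x : ℝ, f6 (-x) = f6 x) ∧
    (∫ x : ℝ, f6 x = 0) ∧
    (∀ z : ℂ, -(1/2) < z.im →
      psi f6 z = (1/4) * (Real.pi : ℂ) ^ (-(1/4 : ℂ) + Complex.I * z / 2) *
        (-1 - 2 * Complex.I * z) * Complex.Gamma (1/4 - Complex.I * z / 2)) ∧
    (∀ z : ℂ, |z.im| < 1/2 → psi f6 z ≠ 0) := by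
  refine ⟨?_, fun x => by simp [f6], ?_, psi_f6_eq, fun z hz => ?_⟩
  · rw [f6_eq_polyGauss]
    exact exists_schwartz_polyGauss _
  · rw [f6_eq_polyGauss]
    exact integral_eq_zero_of_hasDerivAt_of_integrable (polyGauss_hasDerivAt _)
      (integrable_polyGauss _) (integrable_polyGauss _)
  · obtain ⟨h1, h2⟩ := abs_lt.mp hz
    rw [psi_f6_eq z h1]
    have hpi : (Real.pi : ℂ) ≠ 0 := Complex.ofReal_ne_zero.mpr Real.pi_ne_zero
    have hG : Complex.Gamma (1/4 - Complex.I * z / 2) ≠ 0 := by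
      apply Complex.Gamma_ne_zero_of_re_pos
      have : (1/4 - Complex.I * z / 2 : ℂ).re = 1/4 + z.im / 2 := by
        simp [neg_div]
      rw [this]
      linarith
    have hc : (Real.pi : ℂ) ^ (-(1/4 : ℂ) + Complex.I * z / 2) ≠ 0 := by
      simp [Complex.cpow_eq_zero_iff, hpi]
    have hl : (-1 - 2 * Complex.I * z : ℂ) ≠ 0 := by
      intro h
      have := congrArg Complex.re h
      simp at this
      linarith
    exact mul_ne_zero (mul_ne_zero (mul_ne_zero (by norm_num) hc) hl) hG
end

section
/- Let H be the operator (Hf)(x) = x·f′(x) on Schwartz functions. The map f ↦ (1 + H)f = f + x·f′ is a linear bijection from the space of even Schwartz functions on ℝ onto the space of even Schwartz functions g on ℝ with ∫_ℝ g(x) dx = 0. -/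
/-!
The operator is `(1 + H) f = (x f)'`. Hence the image of a Schwartz function is the derivative of a
Schwartz function and has integral zero, and `f` is recovered from `(x f)'` by integrating from `0`
(the value at `0` being `(1 + H) f 0 = f 0`), which gives injectivity.

For surjectivity, given `g` even with integral zero, take `f x = ∫ t in 0..1, g (t x)`. It is smooth
(differentiation under the integral), even, and `(1 + H) f x = ∫ t in 0..1, d/dt (t g (t x)) = g x`.
Since `g` has integral zero over the half-line, `x f x = ∫_0^x g = -∫_x^∞ g` for `x ≥ 0`, so `f`
decays rapidly (`average_decay`). Differentiating `f + x f' = g` gives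
`x f⁽ⁿ⁺¹⁾ = g⁽ⁿ⁾ - (n + 1) f⁽ⁿ⁾`, which propagates the decay to all derivatives
(`isSchwartz_of_onePlusH`).
-/

open MeasureTheory Set

/-- A function `ℝ → ℂ` is Schwartz if it is (the underlying function of) a Schwartz map. -/
def IsSchwartz (f : ℝ → ℂ) : Prop := ∃ F : SchwartzMap ℝ ℂ, ⇑F = f

/-- The operator `(1 + H) f = f + x f'` where `(H f)(x) = x f'(x)`. -/
noncomputable def onePlusH (f : ℝ → ℂ) : ℝ → ℂ := fun x => f x + x * deriv f x

theorem hasDerivAt_mul_self {f : ℝ → ℂ} (hf : Differentiable ℝ f) (x : ℝ) :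
    HasDerivAt (fun y : ℝ => (y : ℂ) * f y) (onePlusH f x) x := by
  have h := (Complex.ofRealCLM.hasDerivAt (x := x)).mul (hf x).hasDerivAt
  refine h.congr_deriv ?_
  simp [onePlusH]

/-! ### The image of the operator -/

/-- `(1 + H) F` is the derivative of the Schwartz function `x F`. -/
theorem exists_schwartz_primitive (F : SchwartzMap ℝ ℂ) :
    ∃ P : SchwartzMap ℝ ℂ, ⇑(SchwartzMap.derivCLM ℂ ℂ P) = onePlusH F := by
  refine ⟨SchwartzMap.smulLeftCLM ℂ Complex.ofReal F, ?_⟩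
  funext x
  have h : (⇑(SchwartzMap.smulLeftCLM ℂ Complex.ofReal F) : ℝ → ℂ) =
      fun y : ℝ => (y : ℂ) * F y := by
    funext y
    rw [SchwartzMap.smulLeftCLM_apply_apply Function.Complex.hasTemperateGrowth_ofReal]
    rfl
  rw [SchwartzMap.derivCLM_apply, h]
  exact (hasDerivAt_mul_self F.differentiable x).deriv

theorem integral_onePlusH (F : SchwartzMap ℝ ℂ) : ∫ x : ℝ, onePlusH F x = 0 := by
  obtain ⟨P, hP⟩ := exists_schwartz_primitive F
  rw [← hP]
  exact integral_eq_zero_of_hasDerivAt_of_integrable (fun x => P.hasDerivAt x)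
    (SchwartzMap.derivCLM ℂ ℂ P).integrable P.integrable

theorem onePlusH_even {f : ℝ → ℂ} (he : ∀ x, f (-x) = f x) (x : ℝ) :
    onePlusH f (-x) = onePlusH f x := by
  have h : deriv f (-x) = - deriv f x := by
    have h1 := deriv_comp_neg f x
    rw [show (fun y => f (-y)) = f from funext he] at h1
    rw [h1, neg_neg]
  simp [onePlusH, h, he]

theorem onePlusH_injOn {f g : ℝ → ℂ} (hf : Differentiable ℝ f) (hg : Differentiable ℝ g)
    (h : onePlusH f = onePlusH g) : f = g := by
  funext x
  by_cases hx : x = 0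
  · subst hx
    simpa [onePlusH] using congrFun h 0
  · have hd : ∀ y : ℝ, HasDerivAt (fun y : ℝ => (y : ℂ) * f y - (y : ℂ) * g y) 0 y := by
      intro y
      refine ((hasDerivAt_mul_self hf y).sub (hasDerivAt_mul_self hg y)).congr_deriv ?_
      rw [h, sub_self]
    have h0 := is_const_of_deriv_eq_zero (fun y => (hd y).differentiableAt)
      (fun y => (hd y).deriv) x 0
    have hx' : (x : ℂ) ≠ 0 := by exact_mod_cast hx
    simp only [Complex.ofReal_zero, zero_mul, sub_self] at h0
    exact mul_left_cancel₀ hx' (sub_eq_zero.mp h0)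

/-! ### A criterion for being Schwartz -/

theorem onePlusH_iteratedDeriv {f : ℝ → ℂ} (hf : ContDiff ℝ (⊤ : ℕ∞) f) (n : ℕ) (x : ℝ) :
    iteratedDeriv n (onePlusH f) x =
      (n + 1) * iteratedDeriv n f x + x * iteratedDeriv (n + 1) f x := by
  have hd : ∀ m : ℕ, Differentiable ℝ (iteratedDeriv m f) := fun m =>
    hf.differentiable_iteratedDeriv m (by exact_mod_cast WithTop.coe_lt_top m)
  induction n generalizing x with
  | zero => simp [onePlusH]
  | succ n ih =>
    rw [iteratedDeriv_succ, funext ih]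
    have h := ((hd n x).hasDerivAt.const_mul ((n : ℂ) + 1)).add
      ((Complex.ofRealCLM.hasDerivAt (x := x)).mul (hd (n + 1) x).hasDerivAt)
    refine h.deriv.trans ?_
    rw [← iteratedDeriv_succ, ← iteratedDeriv_succ]
    simp
    ring

/-- If a smooth `f` decays rapidly and `f + x f'` is Schwartz, then so is `f`: the relation
`x f⁽ⁿ⁺¹⁾ = (f + x f')⁽ⁿ⁾ - (n + 1) f⁽ⁿ⁾` bounds one more derivative at each step. -/
theorem isSchwartz_of_onePlusH {f : ℝ → ℂ} (hf : ContDiff ℝ (⊤ : ℕ∞) f)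
    (hdecay : ∀ k : ℕ, ∃ C : ℝ, ∀ x : ℝ, |x| ^ k * ‖f x‖ ≤ C)
    (G : SchwartzMap ℝ ℂ) (hG : onePlusH f = G) : IsSchwartz f := by
  have key : ∀ n k : ℕ, ∃ C : ℝ, ∀ x : ℝ, |x| ^ k * ‖iteratedDeriv n f x‖ ≤ C := by
    intro n
    induction n with
    | zero => simpa using hdecay
    | succ n ih =>
      have hpos : ∀ k : ℕ, ∃ C : ℝ, ∀ x : ℝ,
          |x| ^ (k + 1) * ‖iteratedDeriv (n + 1) f x‖ ≤ C := by
        intro k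
        obtain ⟨C, hC⟩ := ih k
        refine ⟨SchwartzMap.seminorm ℝ k n G + (n + 1) * C, fun x => ?_⟩
        have h1 := onePlusH_iteratedDeriv hf n x
        rw [hG] at h1
        have h2 : (x : ℂ) * iteratedDeriv (n + 1) f x =
            iteratedDeriv n G x - ((n : ℂ) + 1) * iteratedDeriv n f x := by
          rw [h1]; ring
        have h3 : |x| * ‖iteratedDeriv (n + 1) f x‖ ≤
            ‖iteratedDeriv n G x‖ + (n + 1) * ‖iteratedDeriv n f x‖ := by
          calc |x| * ‖iteratedDeriv (n + 1) f x‖ = ‖(x : ℂ) * iteratedDeriv (n + 1) f x‖ := by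
                simp
            _ ≤ ‖iteratedDeriv n G x‖ + ‖((n : ℂ) + 1) * iteratedDeriv n f x‖ := by
                rw [h2]; exact norm_sub_le _ _
            _ = _ := by
                rw [norm_mul]
                congr 2
                exact_mod_cast Complex.norm_natCast (n + 1)
        have h4 := SchwartzMap.le_seminorm' ℝ k n G x
        calc |x| ^ (k + 1) * ‖iteratedDeriv (n + 1) f x‖
            = |x| ^ k * (|x| * ‖iteratedDeriv (n + 1) f x‖) := by ring
          _ ≤ |x| ^ k * (‖iteratedDeriv n G x‖ + (n + 1) * ‖iteratedDeriv n f x‖) := by gcongr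
          _ = |x| ^ k * ‖iteratedDeriv n G x‖ + (n + 1) * (|x| ^ k * ‖iteratedDeriv n f x‖) := by
              ring
          _ ≤ _ := by gcongr; exact hC x
      rintro (_ | k)
      · -- The relation says nothing near `0`, where continuity gives the bound.
        obtain ⟨C, hC⟩ := hpos 0
        have hcont : Continuous (iteratedDeriv (n + 1) f) :=
          hf.continuous_iteratedDeriv (n + 1) (by exact_mod_cast le_top)
        obtain ⟨D, hD⟩ := (isCompact_Icc (a := (-1 : ℝ)) (b := 1)).exists_bound_of_continuousOn
          hcont.continuousOn
        refine ⟨max C D, fun x => ?_⟩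
        rw [pow_zero, one_mul]
        by_cases hx : |x| ≤ 1
        · exact (hD x (abs_le.mp hx)).trans (le_max_right _ _)
        · refine le_trans ?_ ((hC x).trans (le_max_left _ _))
          rw [zero_add, pow_one]
          exact le_mul_of_one_le_left (norm_nonneg _) (not_le.mp hx).le
      · exact hpos k
  refine ⟨⟨f, hf, fun k n => ?_⟩, rfl⟩
  obtain ⟨C, hC⟩ := key n k
  refine ⟨C, fun x => ?_⟩
  rw [norm_iteratedFDeriv_eq_norm_iteratedDeriv]
  exact hC x

/-! ### The inverse operator -/

/-- The averages `x ↦ ∫ t in 0..1, t ^ n * h (t x)`; the case `n = 0` is the inverse of `1 + H`, and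
larger `n` occur in its derivatives. -/
noncomputable def dilationAverage (n : ℕ) (h : ℝ → ℂ) (x : ℝ) : ℂ :=
  ∫ t in (0 : ℝ)..1, (t : ℂ) ^ n * h (t * x)

theorem hasDerivAt_comp_mul (h : SchwartzMap ℝ ℂ) (t x : ℝ) :
    HasDerivAt (fun y : ℝ => h (t * y)) (t * deriv h (t * x)) x := by
  have := (h.hasDerivAt (t * x)).scomp x ((hasDerivAt_id x).const_mul t)
  simpa [Function.comp_def] using this

theorem hasDerivAt_average (n : ℕ) (h : SchwartzMap ℝ ℂ) (x : ℝ) :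
    HasDerivAt (dilationAverage n h) (dilationAverage (n + 1) (SchwartzMap.derivCLM ℂ ℂ h) x) x := by
  set h' := SchwartzMap.derivCLM ℂ ℂ h with hh'
  have hc := h.continuous
  have hc' := h'.continuous
  refine (intervalIntegral.hasDerivAt_integral_of_dominated_loc_of_deriv_le
    (F := fun x t => (t : ℂ) ^ n * h (t * x)) (F' := fun x t => (t : ℂ) ^ (n + 1) * h' (t * x))
    (bound := fun _ => SchwartzMap.seminorm ℝ 0 0 h')
    (s := univ) Filter.univ_mem ?_ ?_ ?_ ?_ ?_ ?_).2
  · refine Filter.Eventually.of_forall fun y => Continuous.aestronglyMeasurable ?_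
    fun_prop
  · apply Continuous.intervalIntegrable
    fun_prop
  · refine Continuous.aestronglyMeasurable ?_
    fun_prop
  · refine Filter.Eventually.of_forall fun t ht y _ => ?_
    rw [uIoc_of_le zero_le_one] at ht
    rw [norm_mul, norm_pow, Complex.norm_real, Real.norm_eq_abs, abs_of_pos ht.1]
    calc t ^ (n + 1) * ‖h' (t * y)‖ ≤ 1 * ‖h' (t * y)‖ := by
          gcongr
          exact pow_le_one₀ ht.1.le ht.2
      _ ≤ _ := by rw [one_mul]; exact SchwartzMap.norm_le_seminorm ℝ h' _
  · simp
  · refine Filter.Eventually.of_forall fun t _ y _ => ?_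
    refine ((hasDerivAt_comp_mul h t y).const_mul ((t : ℂ) ^ n)).congr_deriv ?_
    rw [hh', SchwartzMap.derivCLM_apply]
    ring

theorem contDiff_average (n : ℕ) (h : SchwartzMap ℝ ℂ) :
    ContDiff ℝ (⊤ : ℕ∞) (dilationAverage n h) := by
  rw [contDiff_infty]
  intro m
  induction m generalizing n h with
  | zero =>
    exact contDiff_zero.mpr
      (continuous_iff_continuousAt.mpr fun x => (hasDerivAt_average n h x).continuousAt)
  | succ m ih =>
    rw [Nat.cast_succ, contDiff_succ_iff_deriv]
    refine ⟨fun x => (hasDerivAt_average n h x).differentiableAt, by simp, ?_⟩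
    rw [funext fun x => (hasDerivAt_average n h x).deriv]
    exact ih _ _

theorem onePlusH_average (g : SchwartzMap ℝ ℂ) : onePlusH (dilationAverage 0 g) = g := by
  funext x
  set g' := SchwartzMap.derivCLM ℂ ℂ g with hg'
  have hc := g.continuous
  have hc' := g'.continuous
  have hint : ∀ t ∈ uIcc (0 : ℝ) 1, HasDerivAt (fun t : ℝ => (t : ℂ) * g (t * x))
      ((t : ℂ) ^ 0 * g (t * x) + x * ((t : ℂ) ^ (0 + 1) * g' (t * x))) t := by
    intro t _
    have h1 := hasDerivAt_comp_mul g x t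
    simp only [mul_comm x] at h1
    refine ((Complex.ofRealCLM.hasDerivAt (x := t)).mul h1).congr_deriv ?_
    rw [hg', SchwartzMap.derivCLM_apply]
    simp
    ring
  have hF := intervalIntegral.integral_eq_sub_of_hasDerivAt hint
    (Continuous.intervalIntegrable (by fun_prop) _ _)
  rw [intervalIntegral.integral_add (Continuous.intervalIntegrable (by fun_prop) _ _)
    (Continuous.intervalIntegrable (by fun_prop) _ _),
    intervalIntegral.integral_const_mul] at hF
  rw [onePlusH, (hasDerivAt_average 0 g x).deriv]
  simpa [dilationAverage, hg'] using hF

theorem average_even {g : ℝ → ℂ} (he : ∀ x, g (-x) = g x) (n : ℕ) (x : ℝ) :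
    dilationAverage n g (-x) = dilationAverage n g x := by
  simp [dilationAverage, he]

theorem mul_average (g : ℝ → ℂ) (x : ℝ) :
    (x : ℂ) * dilationAverage 0 g x = ∫ t in (0 : ℝ)..x, g t := by
  have h := intervalIntegral.smul_integral_comp_mul_left (a := 0) (b := 1) g x
  simp only [mul_zero, mul_one, Complex.real_smul] at h
  rw [← h]
  simp [dilationAverage, mul_comm]

/-- An even function with integral zero has integral zero over `(0, ∞)`, so its primitive from `0`
is minus a tail integral. -/
theorem integral_zero_eq_neg_tail (g : SchwartzMap ℝ ℂ) (he : ∀ x, g (-x) = g x)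
    (h0 : ∫ x : ℝ, g x = 0) (x : ℝ) :
    ∫ t in (0 : ℝ)..x, g t = - ∫ t in Ioi x, g t := by
  have hI : Integrable g := g.integrable
  have h1 := intervalIntegral.integral_interval_add_Ioi (a := 0) (b := x) hI.integrableOn
    hI.integrableOn
  have h2 : ∫ t in Iic (0 : ℝ), g t = ∫ t in Ioi (0 : ℝ), g t := by
    have := integral_comp_neg_Iic (0 : ℝ) (g : ℝ → ℂ)
    simpa [he] using this
  have h3 := integral_add_compl (measurableSet_Iic (a := (0 : ℝ))) hI
  rw [compl_Iic, h2, h0, ← two_mul] at h3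
  have h4 : ∫ t in Ioi (0 : ℝ), g t = 0 := by simpa using h3
  rw [h4] at h1
  exact eq_neg_of_add_eq_zero_left h1

theorem average_decay (g : SchwartzMap ℝ ℂ) (he : ∀ x, g (-x) = g x)
    (h0 : ∫ x : ℝ, g x = 0) (k : ℕ) :
    ∃ C : ℝ, ∀ x : ℝ, |x| ^ k * ‖dilationAverage 0 g x‖ ≤ C := by
  suffices h : ∃ C : ℝ, ∀ x : ℝ, 0 ≤ x → x ^ k * ‖dilationAverage 0 g x‖ ≤ C by
    obtain ⟨C, hC⟩ := h
    refine ⟨C, fun x => ?_⟩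
    have := hC |x| (abs_nonneg x)
    rcases abs_choice x with h | h
    · rwa [h] at this ⊢
    · rw [h] at this ⊢
      rwa [average_even he] at this
  rcases k with _ | k
  · refine ⟨SchwartzMap.seminorm ℝ 0 0 g, fun x _ => ?_⟩
    have := intervalIntegral.norm_integral_le_of_norm_le_const (a := (0 : ℝ)) (b := 1)
      (f := fun t : ℝ => (t : ℂ) ^ 0 * g (t * x)) (C := SchwartzMap.seminorm ℝ 0 0 g)
      (fun t _ => by simpa using SchwartzMap.norm_le_seminorm ℝ g (t * x))
    simpa [dilationAverage] using this
  · have hI := g.integrable_pow_mul volume k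
    refine ⟨∫ t : ℝ, ‖t‖ ^ k * ‖g t‖, fun x hx => ?_⟩
    have h1 : x * ‖dilationAverage 0 g x‖ = ‖∫ t in Ioi x, g t‖ := by
      rw [← norm_neg (∫ t in Ioi x, g t), ← integral_zero_eq_neg_tail g he h0, ← mul_average,
        norm_mul, Complex.norm_real, Real.norm_eq_abs, abs_of_nonneg hx]
    calc x ^ (k + 1) * ‖dilationAverage 0 g x‖ = x ^ k * ‖∫ t in Ioi x, g t‖ := by rw [← h1]; ring
      _ ≤ x ^ k * ∫ t in Ioi x, ‖g t‖ := by
          gcongr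
          exact norm_integral_le_integral_norm _
      _ = ∫ t in Ioi x, x ^ k * ‖g t‖ := (integral_const_mul _ _).symm
      _ ≤ ∫ t in Ioi x, ‖t‖ ^ k * ‖g t‖ := by
          refine setIntegral_mono_on (g.integrable.norm.const_mul _).integrableOn
            hI.integrableOn measurableSet_Ioi fun t ht => ?_
          gcongr
          exact (le_of_lt ht).trans (le_abs_self t)
      _ ≤ ∫ t : ℝ, ‖t‖ ^ k * ‖g t‖ :=
          setIntegral_le_integral hI (Filter.Eventually.of_forall fun t => by positivity)

theorem stmt7 :
    Set.BijOn onePlusH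
      {f : ℝ → ℂ | IsSchwartz f ∧ ∀ x, f (-x) = f x}
      {g : ℝ → ℂ | IsSchwartz g ∧ (∀ x, g (-x) = g x) ∧ ∫ x : ℝ, g x = 0} ∧
    (∀ f g : ℝ → ℂ, IsSchwartz f → IsSchwartz g → ∀ a : ℂ,
      onePlusH (a • f + g) = a • onePlusH f + onePlusH g) := by
  refine ⟨⟨?_, ?_, ?_⟩, ?_⟩
  · rintro _ ⟨⟨F, rfl⟩, he⟩
    obtain ⟨P, hP⟩ := exists_schwartz_primitive F
    exact ⟨⟨_, hP⟩, onePlusH_even he, integral_onePlusH F⟩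
  · rintro _ ⟨⟨F, rfl⟩, -⟩ _ ⟨⟨G, rfl⟩, -⟩ h
    exact onePlusH_injOn F.differentiable G.differentiable h
  · rintro _ ⟨⟨g, rfl⟩, he, h0⟩
    exact ⟨dilationAverage 0 g, ⟨isSchwartz_of_onePlusH (contDiff_average 0 g)
      (average_decay g he h0) g (onePlusH_average g), average_even he 0⟩, onePlusH_average g⟩
  · rintro _ _ ⟨F, rfl⟩ ⟨G, rfl⟩ a
    funext x
    have h : deriv (a • ⇑F + ⇑G) x = a * deriv F x + deriv G x :=
      (((F.hasDerivAt x).const_smul a).add (G.hasDerivAt x)).deriv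
    simp only [onePlusH, h, Pi.add_apply, Pi.smul_apply, smul_eq_mul]
    ring
end

section
/- Let H be the operator (Hf)(x) = x·f′(x) on Schwartz functions. The map f ↦ H(1 + H)f = x·f′(x) + x·(d/dx)(x·f′(x)) is a linear bijection from the space of even Schwartz functions on ℝ onto the space of even Schwartz functions g on ℝ with g(0) = 0 and ∫_ℝ g(x) dx = 0. -/
/-!
The operator `u ↦ u + H u` is `u ↦ (x u)'`, so `H(1 + H) f = (x · x f')'`.

Everything rests on two facts about Schwartz functions. A Schwartz function of total integral zero
has a Schwartz primitive (`exists_primitive`): the primitive is `∫_{-∞}^x g = -∫_x^∞ g`, and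
choosing the tail that avoids the origin bounds `|x|^k |∫_{-∞}^x g|` by `∫ |t|^k |g(t)| dt`. A
Schwartz function vanishing at `0` is `x` times a Schwartz function (`exists_division`): this is the
Fourier transform of the first fact.

Given an even `g` with `g(0) = 0` and `∫ g = 0`, take a primitive `G` of `g`; it is odd, so
`G = x u` with `u` even and `u(0) = G'(0) = 0`, so `u = x v` with `v` odd. Then `∫ v = 0`, `v = f'`
with `f` even, and `H(1 + H) f = (x · x f')' = G' = g`. Conversely `(x · x f')'` integrates to zero,
and if it vanishes identically then `x · x f'` is constant, hence `f' = 0` and `f = 0`.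
-/

open MeasureTheory Set

/-- The operator `H f`, `(H f)(x) = x f'(x)`. -/
noncomputable def Hop (f : ℝ → ℂ) : ℝ → ℂ := fun x => x * deriv f x

/-- The operator `H(1 + H) f = x f' + x (x f')'`. -/
noncomputable def HonePlusH (f : ℝ → ℂ) : ℝ → ℂ :=
  fun x => Hop f x + Hop (Hop f) x

open Filter Topology FourierTransform
open scoped ContDiff SchwartzMap

/-! ### Multiplication by `x` and the operator `H` on Schwartz space -/

/-- Multiplication by the coordinate `x` on Schwartz space. -/
noncomputable def mulX : 𝓢(ℝ, ℂ) →L[ℂ] 𝓢(ℝ, ℂ) :=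
  SchwartzMap.smulLeftCLM ℂ (fun x : ℝ => (x : ℂ))

lemma mulX_apply (F : 𝓢(ℝ, ℂ)) (x : ℝ) : mulX F x = x * F x :=
  SchwartzMap.smulLeftCLM_apply_apply (by fun_prop) F x

/-- The operator `H` on Schwartz space. -/
noncomputable def schwartzH : 𝓢(ℝ, ℂ) →L[ℂ] 𝓢(ℝ, ℂ) :=
  mulX ∘L SchwartzMap.derivCLM ℂ ℂ

lemma schwartzH_coe (F : 𝓢(ℝ, ℂ)) : ⇑(schwartzH F) = Hop F := by
  ext x
  simp [schwartzH, mulX_apply, Hop]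

lemma honePlusH_coe (F : 𝓢(ℝ, ℂ)) :
    HonePlusH F = ⇑(schwartzH F + schwartzH (schwartzH F)) := by
  ext x
  simp [HonePlusH, schwartzH_coe]

/-- The identity `H(1 + H) F = (x · H F)'`. -/
lemma hasDerivAt_mulX_schwartzH (F : 𝓢(ℝ, ℂ)) (x : ℝ) :
    HasDerivAt (mulX (schwartzH F)) (HonePlusH F x) x := by
  have h := (Complex.ofRealCLM.hasDerivAt (x := x)).mul ((schwartzH F).hasDerivAt x)
  have e : ⇑(mulX (schwartzH F)) = (⇑Complex.ofRealCLM * ⇑(schwartzH F)) := by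
    ext y
    simp [mulX_apply]
  rw [e]
  convert! h using 1
  simp [HonePlusH, ← schwartzH_coe]
  simp [schwartzH_coe, Hop]

lemma tendsto_atTop_zero (F : 𝓢(ℝ, ℂ)) : Tendsto F atTop (𝓝 0) :=
  F.tendsto_cocompact.mono_left atTop_le_cocompact

lemma tendsto_atBot_zero (F : 𝓢(ℝ, ℂ)) : Tendsto F atBot (𝓝 0) :=
  F.tendsto_cocompact.mono_left atBot_le_cocompact

lemma deriv_neg_of_even {f : ℝ → ℂ} (hf : ∀ x, f (-x) = f x) (x : ℝ) :
    deriv f (-x) = -deriv f x := by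
  have h := deriv_comp_neg f x
  simp only [hf] at h
  rw [h, neg_neg]

lemma hop_even {f : ℝ → ℂ} (hf : ∀ x, f (-x) = f x) (x : ℝ) : Hop f (-x) = Hop f x := by
  simp [Hop, deriv_neg_of_even hf]

lemma honePlusH_even {f : ℝ → ℂ} (hf : ∀ x, f (-x) = f x) (x : ℝ) :
    HonePlusH f (-x) = HonePlusH f x := by
  simp only [HonePlusH, hop_even hf, hop_even (hop_even hf)]

lemma integral_honePlusH (F : 𝓢(ℝ, ℂ)) : ∫ x : ℝ, HonePlusH F x = 0 := by
  have h := integral_of_hasDerivAt_of_tendsto (hasDerivAt_mulX_schwartzH F)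
    (by rw [honePlusH_coe]; exact SchwartzMap.integrable _)
    (tendsto_atBot_zero _) (tendsto_atTop_zero _)
  simpa using h

/-! ### Primitives and division by `x` -/

lemma norm_pow_mul_integral_le (g : 𝓢(ℝ, ℂ)) (k : ℕ) (x : ℝ) {s : Set ℝ}
    (hs : MeasurableSet s) (hx : ∀ t ∈ s, ‖x‖ ≤ ‖t‖) :
    ‖x‖ ^ k * ‖∫ t in s, g t‖ ≤ ∫ t, ‖t‖ ^ k * ‖g t‖ := by
  have hk : Integrable (fun t : ℝ => ‖t‖ ^ k * ‖g t‖) := g.integrable_pow_mul volume k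
  calc ‖x‖ ^ k * ‖∫ t in s, g t‖ ≤ ‖x‖ ^ k * ∫ t in s, ‖g t‖ := by
        gcongr
        exact norm_integral_le_integral_norm _
    _ = ∫ t in s, ‖x‖ ^ k * ‖g t‖ := (integral_const_mul _ _).symm
    _ ≤ ∫ t in s, ‖t‖ ^ k * ‖g t‖ := by
        refine setIntegral_mono_on ?_ hk.integrableOn hs ?_
        · exact (g.integrable.norm.const_mul _).integrableOn
        · intro t ht
          have := hx t ht
          gcongr
    _ ≤ ∫ t, ‖t‖ ^ k * ‖g t‖ :=
        setIntegral_le_integral hk (Eventually.of_forall fun t => by positivity)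

/-- A Schwartz function with integral zero is the derivative of a Schwartz function. -/
lemma exists_primitive (g : 𝓢(ℝ, ℂ)) (hg : ∫ x, g x = 0) :
    ∃ G : 𝓢(ℝ, ℂ), ∀ x, HasDerivAt G (g x) x := by
  set P : ℝ → ℂ := fun x => ∫ t in Iic x, g t with hP
  have hderiv : ∀ x, HasDerivAt P (g x) x := by
    intro x
    have e : P = fun y => (∫ t in Iic 0, g t) + ∫ t in (0 : ℝ)..y, g t := by
      ext y
      rw [← intervalIntegral.integral_Iic_sub_Iic g.integrable.integrableOn
        g.integrable.integrableOn]
      simp [hP]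
    rw [e]
    exact (intervalIntegral.integral_hasDerivAt_right (g.integrable.intervalIntegrable)
      (g.continuous.stronglyMeasurableAtFilter _ _) g.continuous.continuousAt).const_add _
  have hd : deriv P = g := funext fun x => (hderiv x).deriv
  refine ⟨⟨P, ?_, ?_⟩, hderiv⟩
  · rw [contDiff_infty_iff_deriv, hd]
    exact ⟨fun x => (hderiv x).differentiableAt, g.smooth ⊤⟩
  · intro k n
    cases n with
    | zero =>
      refine ⟨∫ t, ‖t‖ ^ k * ‖g t‖, fun x => ?_⟩
      rw [norm_iteratedFDeriv_zero]
      rcases le_total x 0 with hx | hx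
      · refine norm_pow_mul_integral_le g k x measurableSet_Iic fun t ht => ?_
        rw [Real.norm_of_nonpos hx, Real.norm_of_nonpos (ht.trans hx)]
        exact neg_le_neg ht
      · have e : P x = -∫ t in Ioi x, g t := by
          have := intervalIntegral.integral_Iic_add_Ioi (μ := volume) (b := x) g.integrable.integrableOn
            g.integrable.integrableOn
          rw [hg] at this
          exact eq_neg_of_add_eq_zero_left this
        rw [e, norm_neg]
        refine norm_pow_mul_integral_le g k x measurableSet_Ioi fun t ht => ?_
        have ht' : x < t := ht
        rw [Real.norm_of_nonneg hx, Real.norm_of_nonneg (hx.trans ht'.le)]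
        exact ht'.le
    | succ n =>
      obtain ⟨C, -, hC⟩ := g.decay k n
      refine ⟨C, fun x => ?_⟩
      rw [norm_iteratedFDeriv_eq_norm_iteratedDeriv, iteratedDeriv_succ', hd,
        ← norm_iteratedFDeriv_eq_norm_iteratedDeriv]
      exact hC x

/-- A Schwartz function vanishing at `0` is `x` times a Schwartz function. -/
lemma exists_division (g : 𝓢(ℝ, ℂ)) (hg : g 0 = 0) :
    ∃ q : 𝓢(ℝ, ℂ), ∀ x, g x = x * q x := by
  have hF : 𝓕 (⇑(𝓕⁻ g : 𝓢(ℝ, ℂ))) = ⇑g := by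
    rw [← SchwartzMap.fourier_coe, FourierTransform.fourier_fourierInv_eq]
  obtain ⟨K, hK⟩ := exists_primitive (𝓕⁻ g : 𝓢(ℝ, ℂ)) (by
    rw [← hg, ← hF, Real.fourier_eq]
    simp)
  have hd : deriv K = ⇑(𝓕⁻ g : 𝓢(ℝ, ℂ)) := funext fun x => (hK x).deriv
  refine ⟨(2 * Real.pi * Complex.I : ℂ) • (𝓕 K : 𝓢(ℝ, ℂ)), fun x => ?_⟩
  have h := Real.fourier_deriv K.integrable K.differentiable
    (by rw [hd]; exact SchwartzMap.integrable _)
  rw [hd, hF] at h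
  rw [h, smul_apply, SchwartzMap.fourier_coe]
  simp only [smul_eq_mul]
  ring

/-! ### Constancy, parity, and the bijection -/

lemma eq_of_hasDerivAt_zero {f : ℝ → ℂ} (hf : ∀ x, HasDerivAt f 0 x) (x y : ℝ) : f x = f y :=
  is_const_of_deriv_eq_zero (fun x => (hf x).differentiableAt) (fun x => (hf x).deriv) x y

lemma eq_of_eq_off_zero {f g : ℝ → ℂ} (hf : Continuous f) (hg : Continuous g)
    (h : ∀ x, x ≠ 0 → f x = g x) : f = g :=
  Continuous.ext_on (dense_compl_singleton (0 : ℝ)) hf hg fun x hx => h x hx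

lemma eq_zero_of_honePlusH_eq_zero (F : 𝓢(ℝ, ℂ)) (h : HonePlusH F = 0) : F = 0 := by
  have h1 : ∀ x, mulX (schwartzH F) x = 0 := fun x => by
    rw [eq_of_hasDerivAt_zero (f := mulX (schwartzH F)) (fun y => by
      simpa [h] using hasDerivAt_mulX_schwartzH F y) x 0]
    simp [mulX_apply]
  have h2 : ⇑(SchwartzMap.derivCLM ℂ ℂ F) = 0 := by
    refine eq_of_eq_off_zero (SchwartzMap.continuous _) continuous_zero fun x hx => ?_
    simpa [schwartzH, mulX_apply, hx] using h1 x
  have h3 : ∀ x, HasDerivAt F 0 x := fun x => by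
    have := F.hasDerivAt x
    rwa [← SchwartzMap.derivCLM_apply ℂ F x, h2] at this
  ext x
  have hc : (F : ℝ → ℂ) = fun _ => F x := funext fun y => eq_of_hasDerivAt_zero h3 y x
  have ht := tendsto_atTop_zero F
  rw [hc] at ht
  exact tendsto_nhds_unique tendsto_const_nhds ht

/-- A Schwartz primitive of an even function is odd: `G(x) + G(-x)` is constant and tends to
zero. -/
lemma odd_of_deriv_even {G : 𝓢(ℝ, ℂ)} {g : ℝ → ℂ} (hG : ∀ x, HasDerivAt G (g x) x)
    (hg : ∀ x, g (-x) = g x) (x : ℝ) : G (-x) = -G x := by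
  have hd : ∀ y, HasDerivAt (fun y => G y + G (-y)) 0 y := fun y => by
    simpa [hg] using! (hG y).add ((hG (-y)).scomp y (hasDerivAt_neg y))
  have hc : (fun y => G y + G (-y)) = fun _ => G x + G (-x) :=
    funext fun y => eq_of_hasDerivAt_zero hd y x
  have ht : Tendsto (fun y => G y + G (-y)) atTop (𝓝 (0 + 0)) :=
    (tendsto_atTop_zero G).add ((tendsto_atBot_zero G).comp tendsto_neg_atTop_atBot)
  rw [hc] at ht
  have := tendsto_nhds_unique tendsto_const_nhds ht
  rw [add_zero] at this
  exact eq_neg_of_add_eq_zero_right this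

lemma even_of_deriv_odd {F v : ℝ → ℂ} (hF : ∀ x, HasDerivAt F (v x) x)
    (hv : ∀ x, v (-x) = -v x) (x : ℝ) : F (-x) = F x := by
  have hd : ∀ y, HasDerivAt (fun y => F y - F (-y)) 0 y := fun y => by
    simpa [hv] using! (hF y).sub ((hF (-y)).scomp y (hasDerivAt_neg y))
  have := eq_of_hasDerivAt_zero hd x 0
  simp only [neg_zero, sub_self] at this
  exact (sub_eq_zero.mp this).symm

lemma exists_preimage (g : 𝓢(ℝ, ℂ)) (hev : ∀ x, g (-x) = g x) (h0 : g 0 = 0)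
    (hint : ∫ x, g x = 0) : ∃ F : 𝓢(ℝ, ℂ), (∀ x, F (-x) = F x) ∧ HonePlusH F = g := by
  obtain ⟨G, hG⟩ := exists_primitive g hint
  have hGodd := odd_of_deriv_even hG hev
  have hG0 : G 0 = 0 := by
    have := hGodd 0
    rw [neg_zero] at this
    exact self_eq_neg.mp this
  obtain ⟨u, hu⟩ := exists_division G hG0
  have hGu : ⇑G = fun y : ℝ => (y : ℂ) * u y := funext hu
  have hu0 : u 0 = 0 := by
    have h1 := (Complex.ofRealCLM.hasDerivAt (x := 0)).mul (u.hasDerivAt 0)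
    have e : (⇑Complex.ofRealCLM * ⇑u) = ⇑G := by
      rw [hGu]
      rfl
    rw [e] at h1
    have := h1.unique (hG 0)
    simpa [h0] using this
  obtain ⟨v, hv⟩ := exists_division u hu0
  -- `G = x² v`, so `v` inherits the oddness of `G` away from `0`, and at `0` by continuity.
  have hvodd : ∀ x, v (-x) = -v x := by
    refine congrFun (eq_of_eq_off_zero (v.continuous.comp continuous_neg)
      v.continuous.neg fun x hx => ?_)
    have h1 := hGodd x
    have hx' : (x : ℂ) ≠ 0 := by exact_mod_cast hx
    rw [hu, hu, hv, hv] at h1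
    push_cast at h1
    have h2 : (x : ℂ) * (x * (v (-x))) = x * (x * (-v x)) := by linear_combination h1
    exact mul_left_cancel₀ hx' (mul_left_cancel₀ hx' h2)
  have hvint : ∫ x, v x = 0 := by
    have h1 := integral_neg_eq_self (fun x => v x) (volume : Measure ℝ)
    simp only [hvodd, integral_neg] at h1
    exact self_eq_neg.mp h1.symm
  obtain ⟨F, hF⟩ := exists_primitive v hvint
  refine ⟨F, even_of_deriv_odd hF hvodd, ?_⟩
  have hH : mulX (schwartzH F) = G := by
    ext x
    rw [mulX_apply, schwartzH_coe, Hop, (hF x).deriv, hu, hv]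
  ext x
  have := hasDerivAt_mulX_schwartzH F x
  rw [hH] at this
  exact this.unique (hG x)

lemma honePlusH_linear (F G : 𝓢(ℝ, ℂ)) (a : ℂ) :
    HonePlusH (a • ⇑F + ⇑G) = a • HonePlusH F + HonePlusH G := by
  have e : a • ⇑F + ⇑G = ⇑(a • F + G) := rfl
  rw [e, honePlusH_coe, honePlusH_coe, honePlusH_coe]
  ext x
  simp only [map_add, map_smul, add_apply, smul_apply, Pi.add_apply,
    Pi.smul_apply, smul_eq_mul]
  ring

theorem stmt8 :
    Set.BijOn HonePlusH
      {f : ℝ → ℂ | IsSchwartz f ∧ ∀ x, f (-x) = f x}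
      {g : ℝ → ℂ | IsSchwartz g ∧ (∀ x, g (-x) = g x) ∧ g 0 = 0 ∧ ∫ x : ℝ, g x = 0} ∧
    (∀ f g : ℝ → ℂ, IsSchwartz f → IsSchwartz g → ∀ a : ℂ,
      HonePlusH (a • f + g) = a • HonePlusH f + HonePlusH g) := by
  refine ⟨⟨?_, ?_, ?_⟩, ?_⟩
  · rintro _ ⟨⟨F, rfl⟩, hev⟩
    exact ⟨⟨_, (honePlusH_coe F).symm⟩, honePlusH_even hev, by simp [HonePlusH, Hop],
      integral_honePlusH F⟩
  · rintro _ ⟨⟨F, rfl⟩, -⟩ _ ⟨⟨G, rfl⟩, -⟩ h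
    have h0 : HonePlusH ⇑((-1 : ℂ) • F + G) = 0 := by
      have := honePlusH_linear F G (-1)
      rw [h] at this
      refine this.trans ?_
      simp
    have h1 := eq_zero_of_honePlusH_eq_zero _ h0
    rw [neg_one_smul, neg_add_eq_zero] at h1
    rw [h1]
  · rintro _ ⟨⟨g, rfl⟩, hev, h0, hint⟩
    obtain ⟨F, hF, hFg⟩ := exists_preimage g hev h0 hint
    exact ⟨F, ⟨⟨F, rfl⟩, hF⟩, hFg⟩
  · rintro _ _ ⟨F, rfl⟩ ⟨G, rfl⟩ a
    exact honePlusH_linear F G a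
end

section
/- Let f be an even Schwartz function on ℝ with f(0) = 0. Then the function g defined by g(x) = f(x)/x for x ≠ 0 and g(0) = 0 is an odd Schwartz function on ℝ. -/
/-!
Since `f` is even, `f' 0 = 0`, and since `f 0 = 0`, Hadamard's formula identifies `f x / x` with
`g x = ∫₀¹ f' (t x) dt`, also at `x = 0`. Differentiating under the integral sign
(`hasDerivAt_hadamard`), `g` is smooth with `g⁽ⁿ⁾ x = ∫₀¹ tⁿ f⁽ⁿ⁺¹⁾ (t x) dt`, which is bounded.

Decay of `g⁽ⁿ⁾` comes from differentiating `x g x = f x`, which gives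
`x g⁽ⁿ⁺¹⁾ x + (n + 1) g⁽ⁿ⁾ x = f⁽ⁿ⁺¹⁾ x` (`mul_hadamard_succ`): a bound on `|x|ᵏ |g⁽ⁿ⁾ x|` for every
`n` yields one on `|x|ᵏ⁺¹ |g⁽ⁿ⁾ x|`, so induction on `k` finishes the proof.
-/

open MeasureTheory Set

/-- The integral `∫₀¹ tⁿ f⁽ⁿ⁺¹⁾ (t x) dt`, which is the `n`-th derivative at `x` of the
Hadamard quotient `∫₀¹ f' (t x) dt`. -/
noncomputable def hadamard (f : SchwartzMap ℝ ℂ) (n : ℕ) (x : ℝ) : ℂ :=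
  ∫ t in (0 : ℝ)..1, t ^ n • iteratedDeriv (n + 1) f (t * x)

lemma hasDerivAt_iteratedDeriv_schwartz (f : SchwartzMap ℝ ℂ) (n : ℕ) (x : ℝ) :
    HasDerivAt (iteratedDeriv n f) (iteratedDeriv (n + 1) f x) x := by
  rw [iteratedDeriv_succ]
  exact ((f.smooth (n + 1 : ℕ)).differentiable_iteratedDeriv n
    (by exact_mod_cast n.lt_succ_self) x).hasDerivAt

lemma continuous_iteratedDeriv_schwartz (f : SchwartzMap ℝ ℂ) (n : ℕ) :
    Continuous (iteratedDeriv n f) :=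
  continuous_iff_continuousAt.2 fun x => (hasDerivAt_iteratedDeriv_schwartz f n x).continuousAt

lemma norm_integrand_le (f : SchwartzMap ℝ ℂ) (n m : ℕ) (x : ℝ) {t : ℝ}
    (ht : t ∈ Set.uIoc (0 : ℝ) 1) :
    ‖t ^ n • iteratedDeriv m f (t * x)‖ ≤ SchwartzMap.seminorm ℝ 0 m f := by
  rw [Set.uIoc_of_le zero_le_one] at ht
  have h := f.le_seminorm' ℝ 0 m (t * x)
  rw [pow_zero, one_mul] at h
  rw [norm_smul, norm_pow, Real.norm_of_nonneg ht.1.le]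
  exact (mul_le_of_le_one_left (norm_nonneg _) (pow_le_one₀ ht.1.le ht.2)).trans h

lemma hasDerivAt_hadamard (f : SchwartzMap ℝ ℂ) (n : ℕ) (x : ℝ) :
    HasDerivAt (hadamard f n) (hadamard f (n + 1) x) x := by
  have hc : ∀ (k m : ℕ) (y : ℝ), Continuous fun t : ℝ => t ^ k • iteratedDeriv m f (t * y) :=
    fun k m y => (continuous_pow k).smul
      ((continuous_iteratedDeriv_schwartz f m).comp (continuous_id.mul continuous_const))
  refine (intervalIntegral.hasDerivAt_integral_of_dominated_loc_of_deriv_le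
    (F := fun y t => t ^ n • iteratedDeriv (n + 1) f (t * y))
    (F' := fun y t => t ^ (n + 1) • iteratedDeriv (n + 1 + 1) f (t * y))
    (bound := fun _ => SchwartzMap.seminorm ℝ 0 (n + 1 + 1) f)
    Filter.univ_mem ?_ ?_ ?_ ?_ ?_ ?_).2
  · exact Filter.Eventually.of_forall fun y => (hc _ _ y).aestronglyMeasurable
  · exact (hc _ _ x).intervalIntegrable _ _
  · exact (hc _ _ x).aestronglyMeasurable
  · exact Filter.Eventually.of_forall fun t ht y _ => norm_integrand_le f _ _ y ht
  · exact intervalIntegrable_const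
  · refine Filter.Eventually.of_forall fun t _ y _ => ?_
    have h := ((hasDerivAt_iteratedDeriv_schwartz f (n + 1) (t * y)).scomp y
      ((hasDerivAt_id y).const_mul t)).const_smul (t ^ n)
    simpa [pow_succ, mul_smul, Function.comp_def, Pi.smul_def] using h

lemma norm_hadamard_le (f : SchwartzMap ℝ ℂ) (n : ℕ) (x : ℝ) :
    ‖hadamard f n x‖ ≤ SchwartzMap.seminorm ℝ 0 (n + 1) f := by
  simpa [hadamard] using intervalIntegral.norm_integral_le_of_norm_le_const
    (fun t ht => norm_integrand_le f n (n + 1) x ht)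

lemma iteratedDeriv_hadamard (f : SchwartzMap ℝ ℂ) (n : ℕ) :
    iteratedDeriv n (hadamard f 0) = hadamard f n := by
  induction n with
  | zero => simp
  | succ n ih =>
    rw [iteratedDeriv_succ, ih]
    exact funext fun x => (hasDerivAt_hadamard f n x).deriv

lemma smul_hadamard_zero (f : SchwartzMap ℝ ℂ) (h0 : f 0 = 0) (x : ℝ) :
    x • hadamard f 0 x = f x := by
  have h : ∀ t ∈ Set.uIcc (0 : ℝ) 1,
      HasDerivAt (fun t : ℝ => f (t * x)) (x • iteratedDeriv 1 f (t * x)) t := fun t _ => by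
    have := (hasDerivAt_iteratedDeriv_schwartz f 0 (t * x)).scomp t
      ((hasDerivAt_id t).mul_const x)
    simpa [Function.comp_def] using this
  have hi := intervalIntegral.integral_eq_sub_of_hasDerivAt h
    ((((continuous_iteratedDeriv_schwartz f 1).comp
      (continuous_id.mul continuous_const)).const_smul x).intervalIntegrable _ _)
  rw [intervalIntegral.integral_smul] at hi
  simpa [hadamard, h0] using hi

/-- The `(n + 1)`-st derivative of the identity `x g x = f x`. -/
lemma mul_hadamard_succ (f : SchwartzMap ℝ ℂ) (h0 : f 0 = 0) (n : ℕ) (x : ℝ) :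
    x • hadamard f (n + 1) x + ((n : ℝ) + 1) • hadamard f n x = iteratedDeriv (n + 1) f x := by
  induction n generalizing x with
  | zero =>
    have h := (hasDerivAt_id x).smul (hasDerivAt_hadamard f 0 x)
    have h' := hasDerivAt_iteratedDeriv_schwartz f 0 x
    have e : iteratedDeriv 0 f = (id : ℝ → ℝ) • hadamard f 0 := by
      rw [iteratedDeriv_zero]
      exact (funext (smul_hadamard_zero f h0)).symm
    rw [e] at h'
    rw [← h.unique h']
    simp
  | succ n ih =>
    have h := ((hasDerivAt_id x).smul (hasDerivAt_hadamard f (n + 1) x)).add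
      ((hasDerivAt_hadamard f n x).const_smul ((n : ℝ) + 1))
    have h' := hasDerivAt_iteratedDeriv_schwartz f (n + 1) x
    rw [← funext ih] at h'
    rw [← h.unique h']
    simp only [id, Nat.cast_succ]
    module

lemma hadamard_decay (f : SchwartzMap ℝ ℂ) (h0 : f 0 = 0) (k n : ℕ) :
    ∃ C : ℝ, ∀ x : ℝ, ‖x‖ ^ k * ‖hadamard f n x‖ ≤ C := by
  induction k generalizing n with
  | zero => exact ⟨_, fun x => by simpa using norm_hadamard_le f n x⟩
  | succ k ih =>
    cases n with
    | zero =>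
      refine ⟨SchwartzMap.seminorm ℝ k 0 f, fun x => ?_⟩
      have h := f.norm_pow_mul_le_seminorm ℝ k x
      rwa [← smul_hadamard_zero f h0 x, norm_smul, ← mul_assoc, ← pow_succ] at h
    | succ n =>
      obtain ⟨C, hC⟩ := ih n
      refine ⟨SchwartzMap.seminorm ℝ k (n + 1) f + ((n : ℝ) + 1) * C, fun x => ?_⟩
      have h := f.le_seminorm' ℝ k (n + 1) x
      have hx : ‖x‖ * ‖hadamard f (n + 1) x‖
          ≤ ‖iteratedDeriv (n + 1) f x‖ + ((n : ℝ) + 1) * ‖hadamard f n x‖ := by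
        have e := eq_sub_of_add_eq (mul_hadamard_succ f h0 n x)
        have e2 := norm_sub_le (iteratedDeriv (n + 1) f x) (((n : ℝ) + 1) • hadamard f n x)
        rwa [← e, norm_smul, norm_smul, Real.norm_of_nonneg (by positivity : (0:ℝ) ≤ n + 1)] at e2
      calc ‖x‖ ^ (k + 1) * ‖hadamard f (n + 1) x‖
          = ‖x‖ ^ k * (‖x‖ * ‖hadamard f (n + 1) x‖) := by ring
        _ ≤ ‖x‖ ^ k * (‖iteratedDeriv (n + 1) f x‖ + ((n : ℝ) + 1) * ‖hadamard f n x‖) := by gcongr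
        _ = ‖x‖ ^ k * ‖iteratedDeriv (n + 1) f x‖
            + ((n : ℝ) + 1) * (‖x‖ ^ k * ‖hadamard f n x‖) := by ring
        _ ≤ _ := by
          gcongr
          · exact h
          · exact hC x

lemma contDiff_hadamard (f : SchwartzMap ℝ ℂ) : ContDiff ℝ (⊤ : ℕ∞) (hadamard f 0) :=
  contDiff_of_differentiable_iteratedDeriv fun n _ => by
    rw [iteratedDeriv_hadamard]
    exact fun x => (hasDerivAt_hadamard f n x).differentiableAt

lemma hadamard_zero_of_even (f : SchwartzMap ℝ ℂ) (hev : ∀ x : ℝ, f (-x) = f x) :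
    hadamard f 0 0 = 0 := by
  have h : deriv f 0 = -deriv f 0 := by
    have := deriv_comp_neg f (0 : ℝ)
    rwa [funext hev, neg_zero] at this
  simpa [hadamard] using self_eq_neg.1 h

theorem stmt9 (f : SchwartzMap ℝ ℂ) (hev : ∀ x : ℝ, f (-x) = f x) (h0 : f 0 = 0) :
    IsSchwartz (fun x : ℝ => if x = 0 then 0 else f x / (x : ℂ)) ∧
    (∀ x : ℝ, (if (-x) = 0 then 0 else f (-x) / ((-x : ℝ) : ℂ))
      = -(if x = 0 then 0 else f x / (x : ℂ))) := by
  constructor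
  · refine ⟨⟨hadamard f 0, contDiff_hadamard f, fun k n => ?_⟩, funext fun x => ?_⟩
    · obtain ⟨C, hC⟩ := hadamard_decay f h0 k n
      refine ⟨C, fun x => ?_⟩
      rw [norm_iteratedFDeriv_eq_norm_iteratedDeriv, iteratedDeriv_hadamard]
      exact hC x
    · change hadamard f 0 x = _
      split_ifs with hx
      · rw [hx, hadamard_zero_of_even f hev]
      · rw [eq_div_iff (by exact_mod_cast hx), ← smul_hadamard_zero f h0 x, Complex.real_smul,
          mul_comm]
  · intro x
    by_cases hx : x = 0
    · simp [hx]
    · simp [hx, hev, div_neg]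
end

section
/- Let g be an odd Schwartz function on ℝ. Then the function h(x) = ∫_{−∞}^x g(y) dy is an even Schwartz function on ℝ with h′ = g. -/
/-!
Writing `h x = ∫ y in Iic x, g y`, the fundamental theorem of calculus gives `h' = g`, so `h` is
smooth and its derivatives of positive order are derivatives of `g`. Since `g` is odd, its integral
over `ℝ` vanishes and `h` is even. Only the decay of `h` itself is left: for `x ≤ 0` one has
`|x| ≤ |y|` on `Iic x`, so `|x| ^ k * ‖h x‖ ≤ ∫ |y| ^ k * ‖g y‖`, and evenness covers `x ≥ 0`.
-/

open MeasureTheory Set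

theorem hasDerivAt_integral_Iic (g : SchwartzMap ℝ ℂ) (x : ℝ) :
    HasDerivAt (fun x : ℝ => ∫ y in Iic x, g y) (g x) x := by
  have hint : Integrable (fun y => g y) := g.integrable
  have hsplit : (fun x : ℝ => ∫ y in Iic x, g y) =
      fun x => (∫ y in (0 : ℝ)..x, g y) + ∫ y in Iic (0 : ℝ), g y := by
    funext x
    rw [← intervalIntegral.integral_Iic_sub_Iic hint.integrableOn hint.integrableOn]
    ring
  rw [hsplit]
  exact (intervalIntegral.integral_hasDerivAt_right hint.intervalIntegrable
    (g.continuous.stronglyMeasurableAtFilter _ _) g.continuous.continuousAt).add_const _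

theorem integral_Iic_neg_of_odd (g : SchwartzMap ℝ ℂ) (hodd : ∀ x : ℝ, g (-x) = -g x) (x : ℝ) :
    (∫ y in Iic (-x), g y) = ∫ y in Iic x, g y := by
  have hint : Integrable (fun y => g y) := g.integrable
  have htotal : ∫ y, g y = 0 := by
    have h := integral_neg_eq_self (fun y => g y) volume
    simp only [hodd, integral_neg] at h
    exact self_eq_neg.mp h.symm
  have hsum : (∫ y in Iic (-x), g y) + ∫ y in Ioi (-x), g y = 0 := by
    rw [intervalIntegral.integral_Iic_add_Ioi hint.integrableOn hint.integrableOn, htotal]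
  have hrefl := integral_comp_neg_Iic x (fun y => g y)
  simp only [hodd, integral_neg] at hrefl
  rw [← hrefl] at hsum
  exact add_neg_eq_zero.mp hsum

theorem pow_mul_norm_integral_Iic_le (g : SchwartzMap ℝ ℂ) (k : ℕ) {x : ℝ} (hx : x ≤ 0) :
    ‖x‖ ^ k * ‖∫ y in Iic x, g y‖ ≤ ∫ y, ‖y‖ ^ k * ‖g y‖ := by
  have hint : Integrable (fun y => g y) := g.integrable
  have hk : Integrable (fun y : ℝ => ‖y‖ ^ k * ‖g y‖) := g.integrable_pow_mul volume k
  calc ‖x‖ ^ k * ‖∫ y in Iic x, g y‖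
      ≤ ‖x‖ ^ k * ∫ y in Iic x, ‖g y‖ := by
        gcongr
        exact norm_integral_le_integral_norm _
    _ = ∫ y in Iic x, ‖x‖ ^ k * ‖g y‖ := (integral_const_mul _ _).symm
    _ ≤ ∫ y in Iic x, ‖y‖ ^ k * ‖g y‖ := by
        refine setIntegral_mono_on (hint.norm.const_mul _).integrableOn hk.integrableOn
          measurableSet_Iic fun y hy => ?_
        have hyx : y ≤ x := hy
        have : ‖x‖ ≤ ‖y‖ := by
          rw [Real.norm_of_nonpos hx, Real.norm_of_nonpos (hyx.trans hx)]
          linarith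
        gcongr
    _ ≤ ∫ y, ‖y‖ ^ k * ‖g y‖ :=
        setIntegral_le_integral hk (Filter.Eventually.of_forall fun y => by positivity)

theorem stmt10 (g : SchwartzMap ℝ ℂ) (hodd : ∀ x : ℝ, g (-x) = -g x) :
    IsSchwartz (fun x : ℝ => ∫ y in Iic x, g y) ∧
    (∀ x : ℝ, (∫ y in Iic (-x), g y) = ∫ y in Iic x, g y) ∧
    (∀ x : ℝ, deriv (fun x : ℝ => ∫ y in Iic x, g y) x = g x) := by
  have hderiv : deriv (fun x : ℝ => ∫ y in Iic x, g y) = g :=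
    funext fun x => (hasDerivAt_integral_Iic g x).deriv
  refine ⟨⟨⟨fun x : ℝ => ∫ y in Iic x, g y, ?_, ?_⟩, rfl⟩, integral_Iic_neg_of_odd g hodd,
    congrFun hderiv⟩
  · refine contDiff_infty_iff_deriv.mpr
      ⟨fun x => (hasDerivAt_integral_Iic g x).differentiableAt, ?_⟩
    rw [hderiv]
    exact g.smooth'
  · intro k n
    cases n with
    | zero =>
      refine ⟨∫ y, ‖y‖ ^ k * ‖g y‖, fun x => ?_⟩
      rw [norm_iteratedFDeriv_zero]
      rcases le_total x 0 with hx | hx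
      · exact pow_mul_norm_integral_Iic_le g k hx
      · have h := pow_mul_norm_integral_Iic_le g k (neg_nonpos.mpr hx)
        rwa [norm_neg, integral_Iic_neg_of_odd g hodd] at h
    | succ n =>
      obtain ⟨C, hC⟩ := g.decay' k n
      refine ⟨C, fun x => ?_⟩
      rw [norm_iteratedFDeriv_eq_norm_iteratedDeriv, iteratedDeriv_succ', hderiv,
        ← norm_iteratedFDeriv_eq_norm_iteratedDeriv]
      exact hC x
end

section
/- Let f be an even Schwartz function on ℝ such that Σ_{n=1}^∞ f(nu) = 0 for every u > 0. Then f = 0. -/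
open MeasureTheory Set

/-!
Möbius inversion. For `u > 0` the family `μ(m) f(mnu)` over pairs of positive integers is
absolutely summable, since `f` decays at least like `x⁻²`. Summed over `n` first it is zero by
hypothesis (at `mu`); grouped by `k = mn` it is `∑ₖ (∑_{d ∣ k} μ(d)) f(ku) = f(u)`. So `f` vanishes
on `(0, ∞)`, on `(-∞, 0)` by evenness, and at `0` by continuity.
-/

/-- Quadratic decay of `f` makes the Möbius-weighted double family absolutely summable. -/
lemma summable_moebius_family (f : SchwartzMap ℝ ℂ) {u : ℝ} (hu : 0 < u) :
    Summable fun p : ℕ+ × ℕ+ =>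
      ((ArithmeticFunction.moebius (p.1 : ℕ) : ℤ) : ℂ) *
        f (((p.1 : ℕ) : ℝ) * ((p.2 : ℕ) : ℝ) * u) := by
  obtain ⟨C, hC⟩ := f.decay' 2 0
  have hs : Summable fun n : ℕ+ => 1 / (((n : ℕ) : ℝ)) ^ 2 :=
    (Real.summable_one_div_nat_pow.mpr one_lt_two).comp_injective PNat.coe_injective
  have hs2 : Summable fun p : ℕ+ × ℕ+ =>
      (1 / (((p.1 : ℕ) : ℝ)) ^ 2) * (1 / (((p.2 : ℕ) : ℝ)) ^ 2) :=
    hs.mul_of_nonneg hs (fun _ => by positivity) (fun _ => by positivity)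
  refine Summable.of_norm_bounded (hs2.mul_left (C / u ^ 2)) fun p => ?_
  have h1 : (0 : ℝ) < ((p.1 : ℕ) : ℝ) := by exact_mod_cast p.1.pos
  have h2 : (0 : ℝ) < ((p.2 : ℕ) : ℝ) := by exact_mod_cast p.2.pos
  have hμ : ‖((ArithmeticFunction.moebius (p.1 : ℕ) : ℤ) : ℂ)‖ ≤ 1 := by
    rw [Complex.norm_intCast]
    exact_mod_cast ArithmeticFunction.abs_moebius_le_one
  have hd := hC (((p.1 : ℕ) : ℝ) * ((p.2 : ℕ) : ℝ) * u)
  rw [norm_iteratedFDeriv_zero, Real.norm_of_nonneg (by positivity)] at hd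
  calc _ ≤ 1 * ‖f (((p.1 : ℕ) : ℝ) * ((p.2 : ℕ) : ℝ) * u)‖ := by
        rw [norm_mul]; gcongr
    _ ≤ C / (((p.1 : ℕ) : ℝ) * ((p.2 : ℕ) : ℝ) * u) ^ 2 := by
        rw [one_mul, le_div_iff₀ (by positivity), mul_comm]; exact hd
    _ = _ := by field_simp

lemma eq_zero_of_pos (f : SchwartzMap ℝ ℂ)
    (hsum : ∀ u : ℝ, 0 < u → ∑' n : ℕ, f ((n + 1) * u) = 0) {u : ℝ} (hu : 0 < u) :
    f u = 0 := by
  have hF := summable_moebius_family f hu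
  have hzero := hF.tsum_prod
  have hinner : ∀ m : ℕ+, ∑' n : ℕ+, ((ArithmeticFunction.moebius (m : ℕ) : ℤ) : ℂ) *
      f (((m : ℕ) : ℝ) * ((n : ℕ) : ℝ) * u) = 0 := fun m => by
    have hm : (0 : ℝ) < ((m : ℕ) : ℝ) := by exact_mod_cast m.pos
    rw [tsum_mul_left, tsum_pnat_eq_tsum_succ
      (f := fun n : ℕ => f (((m : ℕ) : ℝ) * (n : ℝ) * u))]
    have := hsum (m * u) (by positivity)
    rw [← this.symm.trans (tsum_congr fun n => ?_), mul_zero]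
    push_cast
    congr 1
    ring
  simp only [hinner, tsum_zero] at hzero
  rw [← sigmaAntidiagonalEquivProd.tsum_eq] at hzero
  have hF' := sigmaAntidiagonalEquivProd.summable_iff.mpr hF
  have hfiber : ∀ k : ℕ+, ∑' x : Nat.divisorsAntidiagonal (k : ℕ),
      ((fun p : ℕ+ × ℕ+ => ((ArithmeticFunction.moebius (p.1 : ℕ) : ℤ) : ℂ) *
        f (((p.1 : ℕ) : ℝ) * ((p.2 : ℕ) : ℝ) * u)) ∘ sigmaAntidiagonalEquivProd) ⟨k, x⟩ =
      (1 : ArithmeticFunction ℂ) (k : ℕ) * f (((k : ℕ) : ℝ) * u) := fun k => by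
    rw [← ArithmeticFunction.coe_moebius_mul_coe_zeta, ArithmeticFunction.coe_mul_zeta_apply,
      ← Nat.sum_divisorsAntidiagonal
        (fun i _ => (((ArithmeticFunction.moebius : ArithmeticFunction ℤ) :
          ArithmeticFunction ℂ) i)),
      Finset.sum_mul, tsum_fintype, ← Finset.sum_coe_sort (Nat.divisorsAntidiagonal (k : ℕ))]
    refine Finset.sum_congr rfl fun x _ => ?_
    have hx : ((x.1.1 : ℕ) : ℝ) * ((x.1.2 : ℕ) : ℝ) = ((k : ℕ) : ℝ) := by
      exact_mod_cast (Nat.mem_divisorsAntidiagonal.mp x.2).1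
    simp [sigmaAntidiagonalEquivProd, divisorsAntidiagonalFactors, hx]
  have hgroup := hF'.tsum_sigma
  simp only [hfiber] at hgroup
  rw [tsum_eq_single (1 : ℕ+)] at hgroup
  · simpa using hgroup.symm.trans hzero
  · intro k hk
    rw [ArithmeticFunction.one_apply_ne (by simpa using hk), zero_mul]

theorem stmt11 (f : SchwartzMap ℝ ℂ) (hev : ∀ x : ℝ, f (-x) = f x)
    (hsum : ∀ u : ℝ, 0 < u → ∑' n : ℕ, f ((n + 1) * u) = 0) :
    ∀ x : ℝ, f x = 0 := by
  have hne : ∀ x : ℝ, x ≠ 0 → f x = 0 := fun x hx => by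
    rcases hx.lt_or_gt with h | h
    · rw [← hev]
      exact eq_zero_of_pos f hsum (neg_pos.mpr h)
    · exact eq_zero_of_pos f hsum h
  have := Continuous.ext_on (dense_compl_singleton (0 : ℝ)) f.continuous continuous_const hne
  exact congrFun this
end

section
/- Let f ∈ S₀^ev. Then the function s ↦ ψ_f(s) = ∫₀^∞ f(u) u^{1/2 − is} du/u on ℝ is smooth, and for all k, m ∈ ℕ there exists C > 0 such that |ψ_f^{(k)}(s)| ≤ C·(1 + |s|)^{−m} for all s ∈ ℝ. -/
/-!
With `u = exp (-x)`, the integral `ψ_f(s)` becomes the Fourier transform, evaluated at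
`-s / (2π)`, of `x ↦ exp (-x/2) • f (exp (-x))`. This function is Schwartz: more generally, for
`a > 0` the function `expPull f a x = exp (-a x) • f (exp (-x))` decays faster than any power of
`x` (as `x → ∞` because of the exponential factor, as `x → -∞` because `f` is Schwartz), and its
derivative is a linear combination of `expPull f' (a + 1)` and `expPull f a`, so all its
derivatives decay rapidly too. Hence `ψ_f` is the Fourier transform of a Schwartz function
composed with a dilation, and is itself Schwartz, which is the claim.
-/

open MeasureTheory Set

open scoped FourierTransform SchwartzMap ContDiff

/-- The pullback of `f` under `x ↦ exp (-x)`, weighted by `exp (-a x)`; its Fourier transform is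
the Mellin transform of `f` on the vertical line of real part `a`. -/
noncomputable def expPull (f : ℝ → ℂ) (a : ℝ) (x : ℝ) : ℂ :=
  Real.exp (-a * x) • f (Real.exp (-x))

lemma contDiff_expPull (f : 𝓢(ℝ, ℂ)) (a : ℝ) : ContDiff ℝ ∞ (expPull f a) := by
  have hf : ContDiff ℝ ∞ f := f.smooth ⊤
  unfold expPull
  fun_prop

lemma deriv_expPull (f : 𝓢(ℝ, ℂ)) (a : ℝ) :
    deriv (expPull f a) =
      (-1 : ℝ) • expPull (SchwartzMap.derivCLM ℝ ℂ f) (a + 1) + (-a) • expPull f a := by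
  funext x
  have h1 : HasDerivAt (fun x : ℝ => Real.exp (-x)) (Real.exp (-x) * -1) x :=
    (hasDerivAt_neg x).exp
  have h2 : HasDerivAt (fun x : ℝ => Real.exp (-a * x)) (Real.exp (-a * x) * (-a)) x := by
    simpa using ((hasDerivAt_id x).const_mul (-a)).exp
  have h3 : HasDerivAt f (deriv f (Real.exp (-x))) (Real.exp (-x)) :=
    (f.differentiableAt).hasDerivAt
  have h4 : HasDerivAt (expPull f a) _ x := h2.smul (h3.scomp x h1)
  rw [h4.deriv]
  have he : Real.exp (-(a + 1) * x) = Real.exp (-a * x) * Real.exp (-x) := by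
    rw [← Real.exp_add]; ring_nf
  simp only [Pi.add_apply, Pi.smul_apply, expPull, SchwartzMap.derivCLM_apply, he,
    Complex.real_smul]
  push_cast
  ring

lemma expPull_decay (f : 𝓢(ℝ, ℂ)) {a : ℝ} (ha : 0 < a) (k : ℕ) :
    ∃ C : ℝ, ∀ x, |x| ^ k * ‖expPull f a x‖ ≤ C := by
  obtain ⟨N, hN⟩ := exists_nat_ge (a + 1)
  obtain ⟨C₀, hC₀, h₀⟩ := f.decay 0 0
  obtain ⟨C₁, hC₁, h₁⟩ := f.decay N 0
  simp only [pow_zero, one_mul, norm_iteratedFDeriv_zero] at h₀ h₁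
  refine ⟨(k.factorial / a ^ k) * C₀ + k.factorial * C₁, fun x => ?_⟩
  have hk : (0 : ℝ) < k.factorial := by exact_mod_cast k.factorial_pos
  have hnorm : ‖expPull f a x‖ = Real.exp (-a * x) * ‖f (Real.exp (-x))‖ := by
    rw [expPull, norm_smul, Real.norm_eq_abs, Real.abs_exp]
  rw [hnorm]
  rcases le_total 0 x with hx | hx
  · -- `(a x) ^ k ≤ k! exp (a x)`, and `f` is bounded.
    have h := Real.pow_div_factorial_le_exp (x := a * x) (by positivity) k
    rw [div_le_iff₀ hk, mul_pow] at h
    have h' : |x| ^ k * Real.exp (-a * x) ≤ k.factorial / a ^ k := by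
      rw [abs_of_nonneg hx, le_div_iff₀ (by positivity)]
      calc x ^ k * Real.exp (-a * x) * a ^ k = (a ^ k * x ^ k) * Real.exp (-a * x) := by ring
        _ ≤ (Real.exp (a * x) * k.factorial) * Real.exp (-a * x) := by gcongr
        _ = k.factorial * (Real.exp (a * x) * Real.exp (-a * x)) := by ring
        _ = k.factorial := by rw [← Real.exp_add]; simp
    calc |x| ^ k * (Real.exp (-a * x) * ‖f (Real.exp (-x))‖)
        = (|x| ^ k * Real.exp (-a * x)) * ‖f (Real.exp (-x))‖ := by ring
      _ ≤ (k.factorial / a ^ k) * C₀ := by gcongr; exact h₀ _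
      _ ≤ _ := by linarith [mul_pos hk hC₁]
  · -- `|x| ^ k ≤ k! exp (-x)`, and `exp (-(a + 1) x) ≤ exp (-x) ^ N` is absorbed by `f`.
    have h := Real.pow_div_factorial_le_exp (x := -x) (by linarith) k
    rw [div_le_iff₀ hk, ← abs_of_nonpos hx] at h
    have h2 : Real.exp |x| * Real.exp (-a * x) ≤ Real.exp (-x) ^ N := by
      rw [abs_of_nonpos hx, ← Real.exp_add, ← Real.exp_nat_mul]
      apply Real.exp_le_exp.mpr
      nlinarith
    have h3 := h₁ (Real.exp (-x))
    rw [Real.norm_eq_abs, Real.abs_exp] at h3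
    calc |x| ^ k * (Real.exp (-a * x) * ‖f (Real.exp (-x))‖)
        ≤ (Real.exp |x| * k.factorial) * (Real.exp (-a * x) * ‖f (Real.exp (-x))‖) := by gcongr
      _ = k.factorial * ((Real.exp |x| * Real.exp (-a * x)) * ‖f (Real.exp (-x))‖) := by ring
      _ ≤ k.factorial * (Real.exp (-x) ^ N * ‖f (Real.exp (-x))‖) := by gcongr
      _ ≤ k.factorial * C₁ := by gcongr
      _ ≤ _ := by
        have : 0 < (k.factorial / a ^ k) * C₀ := by positivity
        linarith

lemma iteratedDeriv_expPull_decay (n k : ℕ) : ∀ (f : 𝓢(ℝ, ℂ)) {a : ℝ}, 0 < a →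
    ∃ C : ℝ, ∀ x, |x| ^ k * ‖iteratedDeriv n (expPull f a) x‖ ≤ C := by
  induction n with
  | zero =>
    intro f a ha
    simpa using expPull_decay f ha k
  | succ n ih =>
    intro f a ha
    obtain ⟨C₁, h₁⟩ := ih (SchwartzMap.derivCLM ℝ ℂ f) (a := a + 1) (by linarith)
    obtain ⟨C₂, h₂⟩ := ih f ha
    refine ⟨C₁ + a * C₂, fun x => ?_⟩
    have hs (g : 𝓢(ℝ, ℂ)) (b c : ℝ) : ContDiffAt ℝ n (c • expPull g b) x :=
      (((contDiff_expPull g b).const_smul c).of_le (mod_cast le_top)).contDiffAt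
    rw [iteratedDeriv_succ', deriv_expPull, iteratedDeriv_add (hs _ _ _) (hs _ _ _),
      iteratedDeriv_const_smul_field, iteratedDeriv_const_smul_field]
    refine (mul_le_mul_of_nonneg_left (norm_add_le _ _) (by positivity)).trans ?_
    rw [norm_smul, norm_smul, norm_neg, norm_neg, norm_one, Real.norm_of_nonneg ha.le]
    have := mul_le_mul_of_nonneg_left (h₂ x) ha.le
    linarith [h₁ x]

/-- `expPull f a` as a Schwartz function, for `a > 0`. -/
noncomputable def expPullSchwartz (f : 𝓢(ℝ, ℂ)) {a : ℝ} (ha : 0 < a) : 𝓢(ℝ, ℂ) where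
  toFun := expPull f a
  smooth' := contDiff_expPull f a
  decay' k n := by
    simpa only [norm_iteratedFDeriv_eq_norm_iteratedDeriv, Real.norm_eq_abs] using
      iteratedDeriv_expPull_decay n k f ha

lemma psi_eq_fourier (f : ℝ → ℂ) (s : ℝ) :
    psi f s = 𝓕 (expPull f (1 / 2)) (-s / (2 * Real.pi)) := by
  have h : psi f s = mellin f ((1 : ℂ) / 2 - Complex.I * s) := by
    refine setIntegral_congr_fun measurableSet_Ioi fun u hu => ?_
    have hu' : (u : ℂ) ≠ 0 := by exact_mod_cast (ne_of_gt hu)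
    simp only [smul_eq_mul]
    rw [Complex.cpow_sub _ 1 hu', Complex.cpow_one]
    ring
  have hre : ((1 : ℂ) / 2 - Complex.I * s).re = 1 / 2 := by simp
  have him : ((1 : ℂ) / 2 - Complex.I * s).im = -s := by simp
  rw [h, mellin_eq_fourier, hre, him]
  rfl

/-- `ψ_f` on the real line is a Schwartz function. -/
lemma exists_schwartz_psi (f : 𝓢(ℝ, ℂ)) :
    ∃ h : 𝓢(ℝ, ℂ), (fun s : ℝ => psi f (s : ℂ)) = h := by
  have hc : (-(2 * Real.pi)⁻¹ : ℝ) ≠ 0 := by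
    have := Real.pi_pos
    exact neg_ne_zero.mpr (by positivity)
  refine ⟨SchwartzMap.compCLMOfContinuousLinearEquiv ℝ
    (ContinuousLinearEquiv.unitsEquivAut ℝ (Units.mk0 _ hc))
    (𝓕 (expPullSchwartz f (a := 1 / 2) (by norm_num))), ?_⟩
  funext s
  rw [psi_eq_fourier, SchwartzMap.compCLMOfContinuousLinearEquiv_apply, Function.comp_apply,
    SchwartzMap.fourier_coe, ContinuousLinearEquiv.unitsEquivAut_apply, Units.val_mk0]
  change 𝓕 (expPull f (1 / 2)) _ = 𝓕 (expPull f (1 / 2)) _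
  ring_nf

theorem stmt13 (f : SchwartzMap ℝ ℂ) (hev : ∀ x : ℝ, f (-x) = f x)
    (h0 : f 0 = 0) (hint : ∫ x : ℝ, f x = 0) :
    ContDiff ℝ (⊤ : ℕ∞) (fun s : ℝ => psi (⇑f) (s : ℂ)) ∧
    ∀ k m : ℕ, ∃ C : ℝ, 0 < C ∧ ∀ s : ℝ,
      ‖iteratedDeriv k (fun s : ℝ => psi (⇑f) (s : ℂ)) s‖ ≤ C * (1 + |s|) ^ (-(m:ℤ)) := by
  obtain ⟨h, hh⟩ := exists_schwartz_psi f
  rw [hh]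
  refine ⟨h.smooth ⊤, fun k m => ?_⟩
  have hb := fun s => SchwartzMap.one_add_le_sup_seminorm_apply (𝕜 := ℝ) (m := (m, k))
    le_rfl le_rfl h s
  refine ⟨_, lt_of_lt_of_le one_pos (le_max_right
    (2 ^ m * ((Finset.Iic (m, k)).sup fun p => SchwartzMap.seminorm ℝ p.1 p.2) h) 1),
    fun s => ?_⟩
  have hs : 0 < (1 + |s|) ^ m := by positivity
  rw [zpow_neg, zpow_natCast, ← div_eq_mul_inv, le_div_iff₀ hs, mul_comm]
  have := hb s
  rw [norm_iteratedFDeriv_eq_norm_iteratedDeriv, Real.norm_eq_abs] at this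
  exact this.trans (le_max_left _ _)
end
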